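/- arXiv:2406.08400 — 4 statements merged into one kernel-verified Lean document; each statement's English description precedes it below -/
import Mathlib

section
/- There exists a constant C > 0 such that for every Schwartz function u₀ : ℝ → ℂ and every x ∈ ℝ one has ( ∫_ℝ |∂_x(e^{−t∂_x³}u₀)(x)|² dt )^{1/2} ≤ C ‖u₀‖_{L²(ℝ)}, where the integral is over t ∈ ℝ and ∂_x denotes the spatial derivative. -/
open MeasureTheory ENNReal

section Helpers

open FourierTransform SchwartzMap Filter
open scoped ContDiff Topology

/-- Plancherel for `L¹ ∩ L²`. -/
lemma plancherel_aux (g : ℝ → ℂ) (hg : Integrable g) (hg2 : MemLp g 2 volume) :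
    eLpNorm (𝓕 g) 2 volume = eLpNorm g 2 volume := by
  set G : Lp ℂ 2 (volume : Measure ℝ) := hg2.toLp g with hG
  have hcont : Continuous (𝓕 g) :=
    VectorFourier.fourierIntegral_continuous Real.continuous_fourierChar
      (by exact continuous_inner) hg
  have key : ∀ᵐ x, (𝓕 g) x = (𝓕 G : Lp ℂ 2 (volume : Measure ℝ)) x := by
    apply ae_eq_of_integral_contDiff_smul_eq
    · exact hcont.locallyIntegrable
    · exact (Lp.memLp _).locallyIntegrable (by norm_num)
    intro f f_smooth f_cpt
    have hf₁ : HasCompactSupport (Complex.ofRealCLM ∘ f) := f_cpt.comp_left rfl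
    have hf₂ : ContDiff ℝ ∞ (Complex.ofRealCLM ∘ f) := by fun_prop
    set φ : 𝓢(ℝ, ℂ) := hf₁.toSchwartzMap hf₂ with hφ
    have h1 := congrArg (fun T : 𝓢'(ℝ, ℂ) => T φ) (Lp.fourier_toTemperedDistribution_eq G)
    simp only [TemperedDistribution.fourier_apply, Lp.toTemperedDistribution_apply] at h1
    have h2 : ∫ x, (𝓕 φ) x • G x = ∫ x, (𝓕 φ) x • g x := by
      apply integral_congr_ae
      filter_upwards [hg2.coeFn_toLp] with x hx
      rw [hG, hx]
    have h3 := VectorFourier.integral_fourierIntegral_smul_eq_flip (μ := volume) (ν := volume)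
      (L := innerₗ ℝ)
      Real.continuous_fourierChar (by exact continuous_inner) hg φ.integrable
    have h4 : ∫ x, (𝓕 g) x • φ x = ∫ x, g x • (𝓕 φ) x := by
      simpa using! h3
    have h5 : ∀ x, φ x = (f x : ℂ) := fun x => rfl
    calc ∫ x, f x • (𝓕 g) x = ∫ x, (𝓕 g) x • φ x := by
          congr 1 with x; simp [h5, mul_comm]
      _ = ∫ x, (𝓕 φ) x • g x := by rw [h4]; simp only [smul_eq_mul, mul_comm]
      _ = ∫ x, φ x • (𝓕 G : Lp ℂ 2 (volume : Measure ℝ)) x := by rw [← h2, h1]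
      _ = _ := by congr 1 with x
  rw [eLpNorm_congr_ae key, ← Lp.enorm_def, ← ofReal_norm, Lp.norm_fourier_eq, ofReal_norm,
    Lp.enorm_def]
  exact eLpNorm_congr_ae hg2.coeFn_toLp

lemma lint_of_eLpNorm (g : ℝ → ℂ) : ∫⁻ t, ‖g t‖ₑ ^ 2 = (eLpNorm g 2 volume) ^ 2 := by
  have := eLpNorm_nnreal_pow_eq_lintegral (f := g) (μ := volume) (p := 2) (by norm_num)
  simpa using this.symm

/-- The phase change of variables. -/
lemma phase_facts :
    (∀ ξ : ℝ, HasDerivAt (fun ξ : ℝ => -ξ ^ 3 / (2 * Real.pi)) (-(3 * ξ ^ 2) / (2 * Real.pi)) ξ) ∧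
    Function.Bijective (fun ξ : ℝ => -ξ ^ 3 / (2 * Real.pi)) := by
  have hpi := Real.pi_pos
  refine ⟨fun ξ => ?_, ?_, ?_⟩
  · have := ((hasDerivAt_pow 3 ξ).neg).div_const (2 * Real.pi)
    simpa using this
  · intro a b h
    have : a ^ 3 = b ^ 3 := by
      have h' : -a ^ 3 / (2 * Real.pi) = -b ^ 3 / (2 * Real.pi) := h
      field_simp at h'
      linarith
    exact (Odd.strictMono_pow (n := 3) (by decide)).injective this
  · apply Continuous.surjective'
    · fun_prop
    · have : Tendsto (fun ξ : ℝ => ξ ^ 3 * (-1 / (2 * Real.pi))) atBot atTop := by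
        apply Tendsto.atBot_mul_const_of_neg (by rw [div_neg_iff]; right; constructor <;> linarith)
        have h0 := tendsto_neg_atTop_atBot.comp
          ((tendsto_pow_atTop (α := ℝ) (n := 3) (by norm_num)).comp tendsto_neg_atBot_atTop)
        exact h0.congr (fun x => by simp only [Function.comp_apply]; ring)
      exact this.congr (fun x => by ring)
    · have : Tendsto (fun ξ : ℝ => ξ ^ 3 * (-1 / (2 * Real.pi))) atTop atBot := by
        apply Tendsto.atTop_mul_const_of_neg (by rw [div_neg_iff]; right; constructor <;> linarith)
        exact tendsto_pow_atTop (by norm_num)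
      exact this.congr (fun x => by ring)

lemma smoothing_aux (H : ℝ → ℂ) (hH : Continuous H) (hH1 : Integrable (fun ξ : ℝ => (ξ : ℂ) * H ξ))
    (hH2 : ∫⁻ ξ, ‖H ξ‖ₑ ^ 2 ≠ ⊤) :
    ∫⁻ t : ℝ, ‖∫ ξ : ℝ, Complex.exp (Complex.I * (t * (ξ : ℂ) ^ 3)) * (ξ * H ξ)‖ₑ ^ 2
      ≤ ENNReal.ofReal (2 * Real.pi / 3) * ∫⁻ ξ, ‖H ξ‖ₑ ^ 2 := by
  have hpi := Real.pi_pos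
  obtain ⟨hd, hinj, hsurj⟩ := phase_facts
  set φ := fun ξ : ℝ => -ξ ^ 3 / (2 * Real.pi) with hφ
  set φ' := fun ξ : ℝ => -(3 * ξ ^ 2) / (2 * Real.pi) with hφ'
  have habs : ∀ ξ, |φ' ξ| = 3 * ξ ^ 2 / (2 * Real.pi) := by
    intro ξ
    simp only [hφ']
    rw [neg_div, abs_neg, abs_of_nonneg (by positivity)]
  set h : ℝ → ℂ := fun ξ => ((|φ' ξ|)⁻¹ : ℝ) • ((ξ : ℂ) * H ξ) with hh
  set g : ℝ → ℂ := fun v => h (Function.surjInv hsurj v) with hg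
  have hgφ : ∀ ξ, g (φ ξ) = h ξ := by
    intro ξ
    simp only [hg]
    rw [hinj (Function.surjInv_eq hsurj (φ ξ))]
  have him : φ '' Set.univ = Set.univ := by rw [Set.image_univ]; exact hsurj.range_eq
  have hdw : ∀ ξ ∈ Set.univ, HasDerivWithinAt φ (φ' ξ) Set.univ ξ :=
    fun ξ _ => (hd ξ).hasDerivWithinAt
  have hsm : ∀ ξ, |φ' ξ| • g (φ ξ) = (ξ : ℂ) * H ξ := by
    intro ξ
    rw [hgφ]
    rcases eq_or_ne ξ 0 with rfl | hξ
    · simp [hh]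
    · have : |φ' ξ| ≠ 0 := by rw [habs]; positivity
      simp only [hh]
      rw [smul_smul, mul_inv_cancel₀ this, one_smul]
  have hint : Integrable g := by
    have := integrableOn_image_iff_integrableOn_abs_deriv_smul MeasurableSet.univ hdw
      hinj.injOn g
    rw [him, integrableOn_univ, integrableOn_univ] at this
    rw [this]
    simpa only [hsm] using hH1
  have hL2 : ∫⁻ v, ‖g v‖ₑ ^ 2 ≤ ENNReal.ofReal (2 * Real.pi / 3) * ∫⁻ ξ, ‖H ξ‖ₑ ^ 2 := by
    have := lintegral_image_eq_lintegral_abs_deriv_mul MeasurableSet.univ hdw hinj.injOn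
      (fun v => ‖g v‖ₑ ^ 2)
    rw [him, setLIntegral_univ, setLIntegral_univ] at this
    rw [this, ← lintegral_const_mul' _ _ ENNReal.ofReal_ne_top]
    apply lintegral_mono
    intro ξ
    simp only
    rw [hgφ, ← ofReal_norm, ← ofReal_norm, ← ENNReal.ofReal_pow (norm_nonneg _),
      ← ENNReal.ofReal_pow (norm_nonneg _), ← ENNReal.ofReal_mul (abs_nonneg _),
      ← ENNReal.ofReal_mul (by positivity)]
    apply ENNReal.ofReal_le_ofReal
    simp only [hh]
    rw [norm_smul, norm_mul, norm_inv, Real.norm_eq_abs, abs_abs, habs, Complex.norm_real,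
      Real.norm_eq_abs, mul_pow, mul_pow, sq_abs]
    rcases eq_or_ne ξ 0 with rfl | hξ
    · simp; positivity
    · apply le_of_eq
      field_simp
  have hmem : MemLp g 2 volume := by
    refine ⟨hint.1, ?_⟩
    have h1 : (eLpNorm g 2 volume) ^ 2 < ⊤ := by
      rw [← lint_of_eLpNorm]
      exact lt_of_le_of_lt hL2 (ENNReal.mul_lt_top ENNReal.ofReal_lt_top hH2.lt_top)
    by_contra hcon
    rw [not_lt, top_le_iff] at hcon
    simp [hcon] at h1
  have hF : ∀ t : ℝ, ∫ ξ : ℝ, Complex.exp (Complex.I * (t * (ξ : ℂ) ^ 3)) * (ξ * H ξ) = 𝓕 g t := by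
    intro t
    rw [Real.fourier_real_eq_integral_exp_smul]
    have := integral_image_eq_integral_abs_deriv_smul MeasurableSet.univ hdw hinj.injOn
      (fun v => Complex.exp (↑(-2 * Real.pi * v * t) * Complex.I) • g v)
    rw [him, setIntegral_univ, setIntegral_univ] at this
    rw [this]
    congr 1 with ξ
    rw [smul_comm, hsm, smul_eq_mul]
    congr 2
    simp only [hφ]
    have : (Real.pi : ℂ) ≠ 0 := by exact_mod_cast hpi.ne'
    push_cast
    field_simp
  simp_rw [hF]
  rw [lint_of_eLpNorm, plancherel_aux g hint hmem, ← lint_of_eLpNorm]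
  exact hL2

lemma deriv_aux (H : ℝ → ℂ) (hH : Continuous H) (hH0 : Integrable H)
    (hH1 : Integrable (fun ξ : ℝ => (ξ : ℂ) * H ξ)) (t x : ℝ) :
    HasDerivAt (fun y : ℝ => ∫ ξ : ℝ,
        Complex.exp (Complex.I * ((y : ℂ) * ξ + (t : ℂ) * (ξ : ℂ) ^ 3)) * H ξ)
      (∫ ξ : ℝ, Complex.exp (Complex.I * ((x : ℂ) * ξ + (t : ℂ) * (ξ : ℂ) ^ 3)) *
        (Complex.I * ξ) * H ξ) x := by
  have hn : ∀ y ξ : ℝ,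
      ‖Complex.exp (Complex.I * ((y : ℂ) * ξ + (t : ℂ) * (ξ : ℂ) ^ 3))‖ = 1 := by
    intro y ξ
    have : Complex.I * ((y : ℂ) * ξ + (t : ℂ) * (ξ : ℂ) ^ 3)
      = ((y * ξ + t * ξ ^ 3 : ℝ) : ℂ) * Complex.I := by push_cast; ring
    rw [this, Complex.norm_exp_ofReal_mul_I]
  refine (hasDerivAt_integral_of_dominated_loc_of_deriv_le
    (F := fun (y : ℝ) (ξ : ℝ) =>
      Complex.exp (Complex.I * ((y : ℂ) * ξ + (t : ℂ) * (ξ : ℂ) ^ 3)) * H ξ)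
    (F' := fun (y : ℝ) (ξ : ℝ) =>
      Complex.exp (Complex.I * ((y : ℂ) * ξ + (t : ℂ) * (ξ : ℂ) ^ 3)) * (Complex.I * ξ) * H ξ)
    (bound := fun ξ : ℝ => ‖(ξ : ℂ) * H ξ‖) (s := Set.univ) univ_mem ?_ ?_ ?_ ?_ hH1.norm ?_).2
  · exact Eventually.of_forall fun y => Continuous.aestronglyMeasurable (by fun_prop)
  · refine hH0.mono (Continuous.aestronglyMeasurable (by fun_prop)) (ae_of_all _ fun ξ => ?_)
    rw [norm_mul, hn, one_mul]
  · exact Continuous.aestronglyMeasurable (by fun_prop)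
  · refine ae_of_all _ fun ξ y _ => ?_
    simp only [norm_mul, hn, Complex.norm_I, one_mul]
    exact le_rfl
  · refine ae_of_all _ fun ξ y _ => ?_
    have h1 : HasDerivAt (fun y : ℝ => Complex.I * ((y : ℂ) * ξ + (t : ℂ) * (ξ : ℂ) ^ 3))
        (Complex.I * ξ) y := by
      have := ((((hasDerivAt_id y).ofReal_comp).mul_const (ξ : ℂ)).add_const
        ((t : ℂ) * (ξ : ℂ) ^ 3)).const_mul Complex.I
      simpa using this
    exact h1.cexp.mul_const _

lemma transform_aux (u₀ : SchwartzMap ℝ ℂ) : ∃ H : ℝ → ℂ,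
    (∀ ξ : ℝ, ∫ z : ℝ, Complex.exp (-Complex.I * z * ξ) * u₀ z = H ξ) ∧ Continuous H ∧
    Integrable H ∧ Integrable (fun ξ : ℝ => (ξ : ℂ) * H ξ) ∧
    ∫⁻ ξ, ‖H ξ‖ₑ ^ 2 = ENNReal.ofReal (2 * Real.pi * ∫ y : ℝ, ‖u₀ y‖ ^ 2) := by
  have hpi := Real.pi_pos
  have hpi2 : 2 * Real.pi ≠ 0 := by positivity
  have hc : Continuous fun ξ : ℝ => (𝓕 u₀) (ξ / (2 * Real.pi)) :=
    (𝓕 u₀).continuous.comp (by fun_prop)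
  refine ⟨fun ξ => (𝓕 u₀) (ξ / (2 * Real.pi)), ?_, hc, ?_, ?_, ?_⟩
  · intro ξ
    simp only [SchwartzMap.fourier_coe]
    rw [Real.fourier_real_eq_integral_exp_smul]
    congr 1 with z
    rw [smul_eq_mul]
    congr 2
    have : (Real.pi : ℂ) ≠ 0 := by exact_mod_cast hpi.ne'
    push_cast
    field_simp
  · exact (𝓕 u₀).integrable.comp_div hpi2
  · have h1 := (((𝓕 u₀).integrable_pow_mul volume 1).comp_div hpi2).const_mul (2 * Real.pi)
    refine h1.mono (Continuous.aestronglyMeasurable (by fun_prop)) (ae_of_all _ fun ξ => ?_)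
    apply le_of_eq
    simp [abs_of_pos hpi]
    field_simp
  · have hi : Integrable (fun ξ => ‖(𝓕 u₀) ξ‖ ^ 2) :=
      ((𝓕 u₀).memLp 2 volume).integrable_norm_pow (by norm_num)
    have hi' := hi.comp_div hpi2
    have h1 : ∫ ξ, ‖(𝓕 u₀) (ξ / (2 * Real.pi))‖ ^ 2 = 2 * Real.pi * ∫ y : ℝ, ‖u₀ y‖ ^ 2 := by
      have h2 := Measure.integral_comp_div (fun ξ : ℝ => ‖(𝓕 u₀) ξ‖ ^ 2) (2 * Real.pi)
      rw [h2, SchwartzMap.integral_norm_sq_fourier, abs_of_pos (by positivity), smul_eq_mul]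
    rw [← h1, ofReal_integral_eq_lintegral_ofReal hi' (ae_of_all _ fun ξ => by positivity)]
    congr 1 with ξ
    rw [ENNReal.ofReal_pow (norm_nonneg _), ofReal_norm]

end Helpers

/-- Kato-type local smoothing estimate for the Airy group (Kenig–Ponce–Vega):
`‖∂ₓ e^{−t∂ₓ³}u₀‖_{L^∞ₓ L²_t} ≤ C ‖u₀‖_{L²}`. -/
theorem airy_smoothing :
    ∃ C > 0, ∀ u₀ : SchwartzMap ℝ ℂ, ∀ x : ℝ,
      (∫⁻ t : ℝ,
          (‖deriv (fun y : ℝ =>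
              (1 / (2 * Real.pi) : ℂ) *
                ∫ ξ : ℝ, Complex.exp (Complex.I * ((y : ℂ) * ξ + (t : ℂ) * (ξ : ℂ) ^ 3)) *
                  ∫ z : ℝ, Complex.exp (-Complex.I * z * ξ) * u₀ z) x‖₊ : ℝ≥0∞) ^ 2) ^
        ((1 : ℝ) / 2) ≤
      ENNReal.ofReal (C * (∫ y : ℝ, ‖u₀ y‖ ^ 2) ^ ((1 : ℝ) / 2)) := by
  have hpi := Real.pi_pos
  refine ⟨1, one_pos, fun u₀ x => ?_⟩
  obtain ⟨H, hH, hHc, hH0, hH1, hH2⟩ := transform_aux u₀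
  simp_rw [hH]
  have hN : 0 ≤ ∫ y : ℝ, ‖u₀ y‖ ^ 2 := integral_nonneg fun y => by positivity
  rw [one_mul, ← ENNReal.ofReal_rpow_of_nonneg hN (by norm_num)]
  apply ENNReal.rpow_le_rpow _ (by norm_num)
  set K : ℝ → ℂ := fun ξ => Complex.exp (Complex.I * (x * ξ)) * H ξ with hK
  have hKn : ∀ ξ : ℝ, ‖K ξ‖ = ‖H ξ‖ := by
    intro ξ
    have : Complex.I * ((x : ℂ) * ξ) = ((x * ξ : ℝ) : ℂ) * Complex.I := by push_cast; ring
    simp only [hK]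
    rw [norm_mul, this, Complex.norm_exp_ofReal_mul_I, one_mul]
  have hKe : ∀ ξ : ℝ, ‖K ξ‖ₑ = ‖H ξ‖ₑ := fun ξ => by
    rw [← ofReal_norm, hKn, ofReal_norm]
  have hKc : Continuous K := by fun_prop
  have hK1 : Integrable (fun ξ : ℝ => (ξ : ℂ) * K ξ) := by
    refine hH1.mono (Continuous.aestronglyMeasurable (by fun_prop)) (ae_of_all _ fun ξ => ?_)
    rw [norm_mul (ξ : ℂ) (K ξ), norm_mul (ξ : ℂ) (H ξ), hKn]
  have hmain := smoothing_aux K hKc hK1 (by simp_rw [hKe, hH2]; exact ENNReal.ofReal_ne_top)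
  simp_rw [hKe, hH2] at hmain
  have hd : ∀ t : ℝ, (‖deriv (fun y : ℝ => (1 / (2 * Real.pi) : ℂ) *
      ∫ ξ : ℝ, Complex.exp (Complex.I * ((y : ℂ) * ξ + (t : ℂ) * (ξ : ℂ) ^ 3)) * H ξ) x‖₊ : ℝ≥0∞)
        ^ 2 = ENNReal.ofReal ((1 / (2 * Real.pi)) ^ 2) *
        ‖∫ ξ : ℝ, Complex.exp (Complex.I * (t * (ξ : ℂ) ^ 3)) * (ξ * K ξ)‖ₑ ^ 2 := by
    intro t
    rw [((deriv_aux H hHc hH0 hH1 t x).const_mul _).deriv]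
    have : ∫ ξ : ℝ, Complex.exp (Complex.I * ((x : ℂ) * ξ + (t : ℂ) * (ξ : ℂ) ^ 3)) *
        (Complex.I * ξ) * H ξ = Complex.I *
        ∫ ξ : ℝ, Complex.exp (Complex.I * (t * (ξ : ℂ) ^ 3)) * (ξ * K ξ) := by
      rw [← integral_const_mul]
      congr 1 with ξ
      simp only [hK]
      rw [mul_add, Complex.exp_add]
      ring
    rw [this, ← enorm_eq_nnnorm, ← ofReal_norm, norm_mul, norm_mul, Complex.norm_I, one_mul,
      ENNReal.ofReal_mul (norm_nonneg _), ofReal_norm (∫ _, _), mul_pow,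
      ← ENNReal.ofReal_pow (norm_nonneg _)]
    congr 3
    simp [abs_of_pos hpi]
  simp_rw [hd]
  rw [lintegral_const_mul' _ _ ENNReal.ofReal_ne_top]
  refine (mul_le_mul_right hmain _).trans ?_
  rw [← ENNReal.ofReal_mul (by positivity), ← ENNReal.ofReal_mul (by positivity)]
  apply ENNReal.ofReal_le_ofReal
  have : (1 / (2 * Real.pi)) ^ 2 * (2 * Real.pi / 3 * (2 * Real.pi * ∫ y : ℝ, ‖u₀ y‖ ^ 2))
      = (∫ y : ℝ, ‖u₀ y‖ ^ 2) / 3 := by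
    field_simp
  rw [this]
  linarith
end

section
/- Let s > 3/4 and b > 1/2. There exists a constant C > 0 such that for every T with 0 < T ≤ 1 and every Schwartz function U : ℝ² → ℂ one has ( ∫_ℝ ( sup_{|t| ≤ T} |U(x,t)| )² dx )^{1/2} ≤ C · ( ∫_{ℝ²} (1+|ξ|)^{2s} (1+|τ−ξ³|)^{2b} |Û(ξ,τ)|² dξ dτ )^{1/2}. -/
open MeasureTheory ENNReal

/-- The oscillating factor. -/
noncomputable def airyPh (a c η : ℝ) : ℂ := Complex.exp (((a * η + c * η ^ 3 : ℝ) : ℂ) * Complex.I)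

lemma airyPh_norm (a c η : ℝ) : ‖airyPh a c η‖ = 1 := Complex.norm_exp_ofReal_mul_I _

lemma airyPh_hasDerivAt (a c η : ℝ) :
    HasDerivAt (airyPh a c) (airyPh a c η * (((a + 3 * c * η ^ 2 : ℝ) : ℂ) * Complex.I)) η := by
  unfold airyPh
  have h1 : HasDerivAt (fun η : ℝ => a * η + c * η ^ 3) (a + 3 * c * η ^ 2) η := by
    have := ((hasDerivAt_id η).const_mul a).add (((hasDerivAt_id η).pow 3).const_mul c)
    refine this.congr_deriv ?_
    simp; try ring
  exact (h1.ofReal_comp.mul_const Complex.I).cexp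

lemma airyPh_cont (a c : ℝ) : Continuous (airyPh a c) := by
  unfold airyPh; fun_prop

lemma airy_ibp (a c l r : ℝ) (hlr : l ≤ r) (p p' : ℝ → ℝ)
    (hp : ∀ η ∈ Set.Icc l r, HasDerivAt p (p' η) η) (hp' : ContinuousOn p' (Set.Icc l r))
    (hl : p l = 0) (hr : p r = 0) :
    ∫ η in l..r, airyPh a c η * (((a + 3 * c * η ^ 2) * p η : ℝ) : ℂ)
      = Complex.I * ∫ η in l..r, airyPh a c η * (p' η : ℂ) := by
  have hpc : ContinuousOn p (Set.Icc l r) := fun η hη => (hp η hη).continuousAt.continuousWithinAt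
  have e := airyPh_cont a c
  have i1 : IntervalIntegrable (fun η => airyPh a c η * (((a + 3 * c * η ^ 2) * p η : ℝ) : ℂ))
      volume l r := by
    apply ContinuousOn.intervalIntegrable
    rw [Set.uIcc_of_le hlr]
    apply e.continuousOn.mul
    apply Complex.continuous_ofReal.comp_continuousOn
    exact ContinuousOn.mul (by fun_prop) hpc
  have i2 : IntervalIntegrable (fun η => airyPh a c η * (p' η : ℂ)) volume l r := by
    apply ContinuousOn.intervalIntegrable
    rw [Set.uIcc_of_le hlr]
    apply e.continuousOn.mul
    exact Complex.continuous_ofReal.comp_continuousOn hp'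
  have key := intervalIntegral.integral_eq_sub_of_hasDerivAt (a := l) (b := r)
    (f := fun η => airyPh a c η * (p η : ℂ))
    (f' := fun η => Complex.I * (airyPh a c η * (((a + 3 * c * η ^ 2) * p η : ℝ) : ℂ))
      + airyPh a c η * (p' η : ℂ)) (by
        intro η hη
        rw [Set.uIcc_of_le hlr] at hη
        refine ((airyPh_hasDerivAt a c η).mul (hp η hη).ofReal_comp).congr_deriv ?_
        push_cast; ring) ((i1.const_mul _).add i2)
  rw [intervalIntegral.integral_add (i1.const_mul _) i2, intervalIntegral.integral_const_mul] at key
  simp only [hl, hr, Complex.ofReal_zero, mul_zero, sub_zero] at key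
  have h2 : Complex.I * (Complex.I * ∫ η in l..r, airyPh a c η * (((a + 3 * c * η ^ 2) * p η : ℝ) : ℂ))
     = - ∫ η in l..r, airyPh a c η * (((a + 3 * c * η ^ 2) * p η : ℝ) : ℂ) := by
    rw [← mul_assoc, Complex.I_mul_I]; ring
  linear_combination h2 - Complex.I * key

/-- Nonstationary bound. -/
lemma airy_nonstat (χ χ' χ'' : ℝ → ℝ) (M : ℝ) (h1 : ∀ η, HasDerivAt χ (χ' η) η)
    (h2 : ∀ η, HasDerivAt χ' (χ'' η) η) (h3 : Continuous χ'') (b0 : ∀ η, |χ η| ≤ M)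
    (b1 : ∀ η, |χ' η| ≤ M) (b2 : ∀ η, |χ'' η| ≤ M)
    (z0 : χ (-3) = 0) (z1 : χ 3 = 0) (z2 : χ' (-3) = 0) (z3 : χ' 3 = 0) (a c : ℝ) (ha : a ≠ 0)
    (hac : 96 * |c| ≤ |a|) :
    ‖∫ η in (-3)..3, airyPh a c η * (χ η : ℂ)‖ ≤ 78 * M / a ^ 2 := by
  have hM : 0 ≤ M := (abs_nonneg _).trans (b0 0)
  have ha' : 0 < |a| := abs_pos.mpr ha
  set A := |a| with hA
  have hlow : ∀ η ∈ Set.Icc (-3 : ℝ) 3, A / 2 ≤ |a + 3 * c * η ^ 2| := by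
    intro η hη
    have hη2 : η ^ 2 ≤ 9 := by nlinarith [hη.1, hη.2]
    have : |3 * c * η ^ 2| ≤ A / 2 := by
      rw [abs_mul, abs_mul, abs_of_nonneg (sq_nonneg η), abs_of_pos (by norm_num : (0:ℝ) < 3)]
      nlinarith [abs_nonneg c, sq_nonneg η]
    have h4 := abs_sub_abs_le_abs_sub a (-(3 * c * η ^ 2))
    rw [abs_neg, sub_neg_eq_add] at h4
    linarith
  set q : ℝ → ℝ := fun η => (a + 3 * c * η ^ 2)⁻¹ with hq
  set q' : ℝ → ℝ := fun η => - (6 * c * η) * (q η) ^ 2 with hq'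
  set q'' : ℝ → ℝ := fun η => - (6 * c) * (q η) ^ 2 + - (6 * c * η) * (2 * q η * q' η) with hq''
  have hne : ∀ η ∈ Set.Icc (-3 : ℝ) 3, a + 3 * c * η ^ 2 ≠ 0 := by
    intro η hη
    have := hlow η hη
    exact abs_pos.mp (by linarith)
  have dq : ∀ η ∈ Set.Icc (-3 : ℝ) 3, HasDerivAt q (q' η) η := by
    intro η hη
    have h5 : HasDerivAt (fun η : ℝ => a + 3 * c * η ^ 2) (6 * c * η) η := by
      have := (((hasDerivAt_id η).pow 2).const_mul (3 * c)).const_add a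
      refine this.congr_deriv ?_
      simp; try ring
    refine (h5.inv (hne η hη)).congr_deriv ?_
    simp only [hq', hq]
    rw [div_eq_mul_inv, inv_pow]
  have dq' : ∀ η ∈ Set.Icc (-3 : ℝ) 3, HasDerivAt q' (q'' η) η := by
    intro η hη
    have h5 : HasDerivAt (fun η : ℝ => - (6 * c * η)) (- (6 * c)) η := by
      have := ((hasDerivAt_id η).const_mul (6 * c)).neg
      refine this.congr_deriv ?_
      simp
    refine (h5.mul ((dq η hη).pow 2)).congr_deriv ?_
    simp only [hq'']
    simp
  have bq : ∀ η ∈ Set.Icc (-3 : ℝ) 3, |q η| ≤ 2 / A := by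
    intro η hη
    simp only [hq, abs_inv]
    rw [show 2 / A = (A / 2)⁻¹ by rw [inv_div]]
    exact inv_anti₀ (by linarith) (hlow η hη)
  have hcA : |c| ≤ A / 96 := by linarith
  have bη : ∀ η ∈ Set.Icc (-3 : ℝ) 3, |η| ≤ 3 := fun η hη => abs_le.mpr hη
  have bq' : ∀ η ∈ Set.Icc (-3 : ℝ) 3, |q' η| ≤ 1 / A := by
    intro η hη
    simp only [hq', abs_mul, abs_neg, abs_pow]
    calc |(6:ℝ)| * |c| * |η| * |q η| ^ 2 ≤ 6 * (A / 96) * 3 * (2 / A) ^ 2 := by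
          rw [abs_of_pos (by norm_num : (0:ℝ) < 6)]
          gcongr
          · exact bη η hη
          · exact bq η hη
      _ ≤ 1 / A := by
          field_simp; norm_num
  have bq'' : ∀ η ∈ Set.Icc (-3 : ℝ) 3, |q'' η| ≤ 1 / A := by
    intro η hη
    simp only [hq'']
    refine (abs_add_le _ _).trans ?_
    simp only [abs_mul, abs_neg, abs_pow]
    rw [abs_of_pos (by norm_num : (0:ℝ) < 6), abs_of_pos (by norm_num : (0:ℝ) < 2)]
    calc 6 * |c| * |q η| ^ 2 + 6 * |c| * |η| * (2 * |q η| * |q' η|) 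
        ≤ 6 * (A / 96) * (2 / A) ^ 2 + 6 * (A / 96) * 3 * (2 * (2 / A) * (3 / 4 / A)) := by
          have : |q' η| ≤ 3 / 4 / A := by
            simp only [hq', abs_mul, abs_neg, abs_pow]
            calc |(6:ℝ)| * |c| * |η| * |q η| ^ 2 ≤ 6 * (A / 96) * 3 * (2 / A) ^ 2 := by
                  rw [abs_of_pos (by norm_num : (0:ℝ) < 6)]
                  gcongr
                  · exact bη η hη
                  · exact bq η hη
              _ ≤ 3 / 4 / A := by
                  field_simp; norm_num
          gcongr
          · exact bq η hη
          · exact bη η hη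
          · exact bq η hη
      _ ≤ 1 / A := by
          field_simp; norm_num
  have cq : ContinuousOn q (Set.Icc (-3) 3) :=
    fun η hη => (dq η hη).continuousAt.continuousWithinAt
  have cq' : ContinuousOn q' (Set.Icc (-3) 3) :=
    fun η hη => (dq' η hη).continuousAt.continuousWithinAt
  have cq'' : ContinuousOn q'' (Set.Icc (-3) 3) := by
    simp only [hq'']
    fun_prop
  have cχ : Continuous χ := continuous_iff_continuousAt.mpr fun η => (h1 η).continuousAt
  have cχ' : Continuous χ' := continuous_iff_continuousAt.mpr fun η => (h2 η).continuousAt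
  set f1 : ℝ → ℝ := fun η => χ' η * q η + χ η * q' η with hf1
  set f1' : ℝ → ℝ := fun η => (χ'' η * q η + χ' η * q' η) + (χ' η * q' η + χ η * q'' η) with hf1'
  have df1 : ∀ η ∈ Set.Icc (-3 : ℝ) 3, HasDerivAt f1 (f1' η) η := fun η hη =>
    ((h2 η).mul (dq η hη)).add ((h1 η).mul (dq' η hη))
  have cf1 : ContinuousOn f1 (Set.Icc (-3) 3) :=
    fun η hη => (df1 η hη).continuousAt.continuousWithinAt
  have cf1' : ContinuousOn f1' (Set.Icc (-3) 3) := by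
    simp only [hf1']
    have := cχ.continuousOn (s := Set.Icc (-3) 3)
    have := cχ'.continuousOn (s := Set.Icc (-3) 3)
    have := h3.continuousOn (s := Set.Icc (-3) 3)
    fun_prop
  have s1 := airy_ibp a c (-3) 3 (by norm_num) (fun η => χ η * q η) f1
    (fun η hη => (h1 η).mul (dq η hη)) cf1 (by simp [z0]) (by simp [z1])
  have s2 := airy_ibp a c (-3) 3 (by norm_num) (fun η => f1 η * q η)
    (fun η => f1' η * q η + f1 η * q' η)
    (fun η hη => (df1 η hη).mul (dq η hη)) (by fun_prop) (by simp [hf1, z0, z2])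
      (by simp [hf1, z1, z3])
  have e1 : ∀ f : ℝ → ℝ, ∫ η in (-3)..3, airyPh a c η * (((a + 3 * c * η ^ 2) * (f η * q η) : ℝ) : ℂ)
      = ∫ η in (-3)..3, airyPh a c η * (f η : ℂ) := by
    intro f
    apply intervalIntegral.integral_congr
    intro η hη
    rw [Set.uIcc_of_le (by norm_num)] at hη
    have := hne η hη
    simp only [hq]
    congr 2
    field_simp
  rw [e1] at s1 s2
  rw [s1, s2, norm_mul, norm_mul, Complex.norm_I, one_mul, one_mul]
  refine (intervalIntegral.norm_integral_le_of_norm_le_const (C := 13 * M / A ^ 2) ?_).trans ?_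
  · intro η hη
    rw [Set.uIoc_of_le (by norm_num)] at hη
    have hη' : η ∈ Set.Icc (-3 : ℝ) 3 := Set.Ioc_subset_Icc_self hη
    rw [norm_mul, airyPh_norm, one_mul, Complex.norm_real, Real.norm_eq_abs]
    have k1 : |f1 η| ≤ M * (2 / A) + M * (1 / A) := by
      refine (abs_add_le _ _).trans ?_
      rw [abs_mul, abs_mul (χ η)]
      gcongr
      exacts [b1 η, bq η hη', b0 η, bq' η hη']
    have k2 : |f1' η| ≤ (M * (2 / A) + M * (1 / A)) + (M * (1 / A) + M * (1 / A)) := by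
      refine (abs_add_le _ _).trans (add_le_add ((abs_add_le _ _).trans ?_)
        ((abs_add_le _ _).trans ?_))
      · rw [abs_mul, abs_mul (χ' η)]
        gcongr
        exacts [b2 η, bq η hη', b1 η, bq' η hη']
      · rw [abs_mul (χ' η), abs_mul (χ η)]
        gcongr
        exacts [b1 η, bq' η hη', b0 η, bq'' η hη']
    refine (abs_add_le _ _).trans ?_
    rw [abs_mul, abs_mul (f1 η)]
    calc |f1' η| * |q η| + |f1 η| * |q' η| ≤
      ((M * (2 / A) + M * (1 / A)) + (M * (1 / A) + M * (1 / A))) * (2 / A)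
        + (M * (2 / A) + M * (1 / A)) * (1 / A) := by
          gcongr
          exacts [bq η hη', bq' η hη']
      _ = 13 * M / A ^ 2 := by field_simp; norm_num
  · rw [hA, sq_abs]
    apply le_of_eq
    rw [show |(3:ℝ) - -3| = 6 by norm_num]
    ring

/-- Stationary bound. -/
lemma airy_stat (χ χ' : ℝ → ℝ) (M : ℝ) (h1 : ∀ η, HasDerivAt χ (χ' η) η)
    (h3 : Continuous χ') (b0 : ∀ η, |χ η| ≤ M)
    (b1 : ∀ η, |χ' η| ≤ M) 
    (z0 : χ (1 / 2) = 0) (z1 : χ 3 = 0) (a c : ℝ) (hc : c ≠ 0) :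
    ‖∫ η in (1/2)..3, airyPh a c η * (χ η : ℂ)‖ ≤ 6 * M / Real.sqrt |c| := by
  have hM : 0 ≤ M := (abs_nonneg _).trans (b0 0)
  have hL : 0 < |c| := abs_pos.mpr hc
  set L := |c| with hLdef
  have cχ : Continuous χ := continuous_iff_continuousAt.mpr fun η => (h1 η).continuousAt
  set g : ℝ → ℝ := fun η => a + 3 * c * η ^ 2 with hg
  have cg : Continuous g := by simp only [hg]; fun_prop
  have dg : ∀ η, HasDerivAt g (6 * c * η) η := by
    intro η
    have := (((hasDerivAt_id η).pow 2).const_mul (3 * c)).const_add a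
    refine this.congr_deriv ?_
    simp; try ring
  have hpos : ∀ η, 0 < g η ^ 2 + L := fun η => by positivity
  set D : ℝ → ℝ := fun η => g η ^ 2 + L with hD
  have cD : Continuous D := by simp only [hD]; fun_prop
  have hDne : ∀ η, D η ≠ 0 := fun η => (hpos η).ne'
  set p' : ℝ → ℝ := fun η => χ' η * (g η / D η) + χ η * (6 * c * η * (L - g η ^ 2) / D η ^ 2) with hp'
  have dp : ∀ η, HasDerivAt (fun η => χ η * (g η / D η)) (p' η) η := by
    intro η
    have dD : HasDerivAt D (2 * g η * (6 * c * η)) η := by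
      have := ((dg η).pow 2).add_const L
      refine this.congr_deriv ?_
      simp
    have := (h1 η).mul ((dg η).div dD (hDne η))
    refine this.congr_deriv ?_
    simp only [hp']
    congr 3
    simp only [hD]; ring
  have cp' : Continuous p' := by
    simp only [hp']
    refine (h3.mul (cg.div cD hDne)).add (cχ.mul (Continuous.div (by fun_prop) (by fun_prop) ?_))
    intro η; exact pow_ne_zero _ (hDne η)
  have s1 := airy_ibp a c (1/2) 3 (by norm_num) (fun η => χ η * (g η / D η)) p'
    (fun η hη => dp η) cp'.continuousOn (by rw [z0, zero_mul]) (by rw [z1, zero_mul])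
  have cE := airyPh_cont a c
  have split : ∫ η in (1/2)..3, airyPh a c η * (χ η : ℂ) =
     Complex.I * (∫ η in (1/2)..3, airyPh a c η * (p' η : ℂ))
      + ∫ η in (1/2)..3, airyPh a c η * ((χ η * (L / D η) : ℝ) : ℂ) := by
    rw [← s1, ← intervalIntegral.integral_add]
    · apply intervalIntegral.integral_congr
      intro η _
      simp only
      rw [← mul_add, ← Complex.ofReal_add]
      congr 2
      have := hDne η
      change χ η = g η * (χ η * (g η / D η)) + _
      field_simp
      rfl
    · apply Continuous.intervalIntegrable
      apply cE.mul
      apply Complex.continuous_ofReal.comp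
      exact cg.mul (cχ.mul (cg.div cD hDne))
    · apply Continuous.intervalIntegrable
      apply cE.mul
      apply Complex.continuous_ofReal.comp
      exact (cχ.mul (continuous_const.div cD hDne))
  set S := Real.sqrt L with hS
  have hSpos : 0 < S := Real.sqrt_pos.mpr hL
  have hSS : S ^ 2 = L := Real.sq_sqrt hL.le
  set R : ℝ → ℝ := fun η => M * (1 / (2 * S)) + M * (4 / 3 * (6 * L * η / D η)) with hR
  have cR : Continuous R := by
    simp only [hR]
    refine continuous_const.add (continuous_const.mul (continuous_const.mul (Continuous.div (by fun_prop) cD hDne)))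
  have hgD : ∀ η, |g η / D η| ≤ 1 / (2 * S) := by
    intro η
    rw [abs_div, abs_of_pos (hpos η), div_le_div_iff₀ (hpos η) (by positivity)]
    nlinarith [sq_nonneg (|g η| - S), sq_abs (g η)]
  have bnd : ‖∫ η in (1/2)..3, airyPh a c η * (χ η : ℂ)‖ ≤ ∫ η in (1/2)..3, R η := by
    rw [split]
    refine (norm_add_le _ _).trans ?_
    rw [norm_mul, Complex.norm_I, one_mul]
    have n1 := intervalIntegral.norm_integral_le_integral_norm (μ := volume) (f := fun η => airyPh a c η * (p' η : ℂ))
      (by norm_num : (1/2 : ℝ) ≤ 3)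
    have n2 := intervalIntegral.norm_integral_le_integral_norm (μ := volume) (f := fun η => airyPh a c η * ((χ η * (L / D η) : ℝ) : ℂ))
      (by norm_num : (1/2 : ℝ) ≤ 3)
    refine (add_le_add n1 n2).trans ?_
    simp only [norm_mul, airyPh_norm, one_mul, Complex.norm_real, Real.norm_eq_abs]
    have c2 : Continuous fun η => χ η * (L / D η) := (cχ.mul (continuous_const.div cD hDne))
    rw [← intervalIntegral.integral_add (cp'.abs.intervalIntegrable _ _) ((by simpa [abs_mul] using c2.abs.intervalIntegrable _ _))]
    apply intervalIntegral.integral_mono_on (by norm_num) 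
    · exact (cp'.abs.intervalIntegrable _ _).add ((by simpa [abs_mul] using c2.abs.intervalIntegrable _ _))
    · exact cR.intervalIntegrable _ _
    intro η hη
    have hη0 : 0 < η := by linarith [hη.1]
    simp only [hp', hR]
    have t1 : |χ' η * (g η / D η)| ≤ M * (1 / (2 * S)) := by
      rw [abs_mul]
      exact mul_le_mul (b1 η) (hgD η) (abs_nonneg _) hM
    have t2 : |χ η * (6 * c * η * (L - g η ^ 2) / D η ^ 2)| ≤ M * (6 * L * η / D η) := by
      rw [abs_mul]
      refine mul_le_mul (b0 η) ?_ (abs_nonneg _) hM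
      rw [abs_div, abs_mul, abs_mul, abs_mul, ← hLdef, abs_of_pos (by norm_num : (0:ℝ) < 6), abs_of_pos hη0,
        abs_of_nonneg (sq_nonneg (D η))]
      have : |L - g η ^ 2| ≤ D η := by
        simp only [hD]
        rw [abs_le]; constructor <;> nlinarith [sq_nonneg (g η)]
      rw [div_le_div_iff₀ (by have := hpos η; positivity) (hpos η)]
      have h0 := hpos η
      have : 6 * L * η * |L - g η ^ 2| * D η ≤ 6 * L * η * D η * D η := by
        gcongr
      nlinarith
    have t3 : |χ η| * |L / D η| ≤ M * (1 / 3 * (6 * L * η / D η)) := by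
      refine mul_le_mul (b0 η) ?_ (abs_nonneg _) hM
      rw [abs_div, abs_of_pos hL, abs_of_pos (hpos η)]
      rw [← mul_div_assoc]
      apply div_le_div_of_nonneg_right _ (hpos η).le
      nlinarith [hη.1]
    have := abs_add_le (χ' η * (g η / D η)) (χ η * (6 * c * η * (L - g η ^ 2) / D η ^ 2))
    linarith
  refine bnd.trans ?_
  obtain ⟨e, he, hec⟩ : ∃ e : ℝ, |e| = 1 ∧ e * c = L := by
    rcases lt_or_gt_of_ne hc with h | h
    · exact ⟨-1, by norm_num, by rw [hLdef, abs_of_neg h]; ring⟩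
    · exact ⟨1, by norm_num, by rw [hLdef, abs_of_pos h]; ring⟩
  have key : ∫ η in (1/2)..3, 6 * L * η / D η = e / S * Real.arctan (g 3 / S) - e / S * Real.arctan (g (1/2) / S) := by
    apply intervalIntegral.integral_eq_sub_of_hasDerivAt (f := fun η => e / S * Real.arctan (g η / S))
    · intro η _
      refine ((((dg η).div_const S).arctan).const_mul (e / S)).congr_deriv ?_
      have h6 : D η = S ^ 2 * (1 + (g η / S) ^ 2) := by
        simp only [hD]; rw [← hSS]; field_simp; ring
      rw [h6, ← hec]
      have : 1 + (g η / S) ^ 2 ≠ 0 := by positivity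
      field_simp
    · exact (Continuous.div (by fun_prop) cD hDne).intervalIntegrable _ _
  have key2 : ∫ η in (1/2)..3, 6 * L * η / D η ≤ 3.15 / S := by
    rw [key, ← mul_sub]
    refine (le_abs_self _).trans ?_
    rw [abs_mul, abs_div, he, abs_of_pos hSpos, div_mul_eq_mul_div, one_mul]
    apply div_le_div_of_nonneg_right _ hSpos.le
    have := Real.pi_lt_d2
    rw [abs_le]
    constructor <;> linarith [Real.arctan_lt_pi_div_two (g 3 / S), Real.arctan_lt_pi_div_two (g (1/2) / S), Real.neg_pi_div_two_lt_arctan (g 3 / S), Real.neg_pi_div_two_lt_arctan (g (1/2) / S)]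
  have c3 : Continuous fun η => 6 * L * η / D η := (Continuous.div (by fun_prop) cD hDne)
  simp only [hR]
  rw [intervalIntegral.integral_add (by simp) (((c3.const_mul _).const_mul _).intervalIntegrable _ _),
    intervalIntegral.integral_const_mul, intervalIntegral.integral_const_mul,
    intervalIntegral.integral_const_mul, intervalIntegral.integral_const]
  have : M * (4 / 3 * ∫ η in (1/2)..3, 6 * L * η / D η) ≤ M * (4 / 3 * (3.15 / S)) := by gcongr
  refine (add_le_add_right this _).trans ?_
  rw [smul_eq_mul, ← sub_nonneg]
  have : 6 * M / S - (M * ((3 - 1 / 2) * (1 / (2 * S))) + M * (4 / 3 * (3.15 / S))) = 0.55 * M / S := by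
    field_simp; ring
  rw [this]; positivity

lemma airy_J_trivial (χ : ℝ → ℝ) (M a c : ℝ) (b0 : ∀ η, |χ η| ≤ M) :
    ‖∫ η in (-3)..3, airyPh a c η * (χ η : ℂ)‖ ≤ 6 * M := by
  refine (intervalIntegral.norm_integral_le_of_norm_le_const (C := M) ?_).trans ?_
  · intro η _
    rw [norm_mul, airyPh_norm, one_mul, Complex.norm_real, Real.norm_eq_abs]
    exact b0 η
  · rw [show |(3:ℝ) - -3| = 6 by norm_num]; linarith

lemma airy_bump_facts (χ : ℝ → ℝ) (hχ : ContDiff ℝ 2 χ) (hs : HasCompactSupport χ) :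
    ∃ M : ℝ, 0 < M ∧ (∀ η, HasDerivAt χ (deriv χ η) η) ∧
      (∀ η, HasDerivAt (deriv χ) (deriv (deriv χ) η) η) ∧ Continuous (deriv (deriv χ)) ∧
      (∀ η, |χ η| ≤ M) ∧ (∀ η, |deriv χ η| ≤ M) ∧ (∀ η, |deriv (deriv χ) η| ≤ M) := by
  have h1 : ContDiff ℝ 1 (deriv χ) := by
    have : ContDiff ℝ (1 + 1) χ := by simpa [one_add_one_eq_two] using hχ
    exact (contDiff_succ_iff_deriv.mp this).2.2
  have h2 : Continuous (deriv (deriv χ)) := h1.continuous_deriv le_rfl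
  obtain ⟨M0, hM0⟩ := hs.exists_bound_of_continuous hχ.continuous
  obtain ⟨M1, hM1⟩ := hs.deriv.exists_bound_of_continuous h1.continuous
  obtain ⟨M2, hM2⟩ := hs.deriv.deriv.exists_bound_of_continuous h2
  refine ⟨max 1 (max M0 (max M1 M2)), by positivity, ?_, ?_, h2, ?_, ?_, ?_⟩
  · exact fun η => (hχ.differentiable (by norm_num) η).hasDerivAt
  · exact fun η => (h1.differentiable (by norm_num) η).hasDerivAt
  · exact fun η => (hM0 η).trans (by simp)
  · exact fun η => (hM1 η).trans (by simp)
  · exact fun η => (hM2 η).trans (by simp)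

lemma airy_J_decay (χ : ℝ → ℝ) (M : ℝ) (hM : 0 < M) (h1 : ∀ η, HasDerivAt χ (deriv χ η) η)
    (h2 : ∀ η, HasDerivAt (deriv χ) (deriv (deriv χ) η) η) (h3 : Continuous (deriv (deriv χ)))
    (b0 : ∀ η, |χ η| ≤ M)
    (b1 : ∀ η, |deriv χ η| ≤ M) (b2 : ∀ η, |deriv (deriv χ) η| ≤ M)
    (hs : tsupport χ ⊆ Set.Ioo (-3) 3) (a c : ℝ) (hac : 96 * |c| ≤ |a|) :
    ‖∫ η in (-3)..3, airyPh a c η * (χ η : ℂ)‖ ≤ 156 * M * (1 + a ^ 2)⁻¹ := by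
  have z : ∀ η, η ∉ Set.Ioo (-3 : ℝ) 3 → χ η = 0 := fun η h =>
    image_eq_zero_of_notMem_tsupport fun h' => h (hs h')
  have z' : ∀ η, η ∉ Set.Ioo (-3 : ℝ) 3 → deriv χ η = 0 := fun η h =>
    image_eq_zero_of_notMem_tsupport fun h' => h (hs (tsupport_deriv_subset h'))
  rcases le_or_gt (a ^ 2) 1 with h | h
  · refine (airy_J_trivial χ M a c b0).trans ?_
    rw [← div_eq_mul_inv, le_div_iff₀ (by positivity)]
    nlinarith
  · have ha : a ≠ 0 := by rintro rfl; norm_num at h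
    refine (airy_nonstat χ _ _ M h1 h2 h3 b0 b1 b2 (z _ (by simp)) (z _ (by simp)) (z' _ (by simp))
      (z' _ (by simp)) a c ha hac).trans ?_
    rw [← div_eq_mul_inv, div_le_div_iff₀ (by positivity) (by positivity)]
    nlinarith

lemma airy_scale (χ : ℝ → ℝ) (hs : tsupport χ ⊆ Set.Ioo (-3) 3) (N z r : ℝ) (hN : N ≠ 0) :
    ∫ ξ, airyPh z r ξ * (χ (ξ / N) : ℂ) =
      |N| * ∫ η in (-3)..3, airyPh (N * z) (N ^ 3 * r) η * (χ η : ℂ) := by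
  have h := Measure.integral_comp_div (fun η => airyPh (N * z) (N ^ 3 * r) η * (χ η : ℂ)) N
  rw [intervalIntegral.integral_eq_integral_of_support_subset]
  · rw [Complex.real_smul] at h
    rw [← h]
    congr 1
    ext ξ
    congr 1
    unfold airyPh
    congr 3
    field_simp
  · intro η hη
    have : χ η ≠ 0 := by
      intro h0; apply hη; simp [h0]
    exact Set.Ioo_subset_Ioc_self (hs (subset_tsupport _ this))

lemma airy_lint_inv (N K : ℝ) (hN : N ≠ 0) (hK : 0 ≤ K) :
    ∫⁻ z : ℝ, ENNReal.ofReal (K * |N| * (1 + (N * z) ^ 2)⁻¹) = ENNReal.ofReal (K * Real.pi) := by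
  have i : Integrable fun z : ℝ => K * |N| * (1 + (N * z) ^ 2)⁻¹ :=
    (integrable_inv_one_add_sq.comp_mul_left' hN).const_mul _
  rw [← ofReal_integral_eq_lintegral_ofReal i (Filter.Eventually.of_forall fun z => by positivity)]
  congr 1
  rw [integral_const_mul, Measure.integral_comp_mul_left (fun z => (1 + z ^ 2)⁻¹) N,
    integral_univ_inv_one_add_sq, smul_eq_mul, abs_inv]
  have : |N| ≠ 0 := abs_ne_zero.mpr hN
  field_simp

/-- The low-frequency kernel. -/
lemma airy_low : ∃ χ : ℝ → ℝ, Continuous χ ∧ HasCompactSupport χ ∧ (∀ ξ, 0 ≤ χ ξ) ∧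
    (∀ ξ, |ξ| ≤ 1 → χ ξ = 1) ∧ ∃ Φ : ℝ → ℝ≥0∞, Measurable Φ ∧ ∫⁻ z, Φ z ≠ ∞ ∧
      ∀ z r : ℝ, |r| ≤ 2 → ‖∫ ξ, airyPh z r ξ * (χ ξ : ℂ)‖ₑ ≤ Φ z := by
  let f : ContDiffBump (0 : ℝ) := ⟨1, 2, by norm_num, by norm_num⟩
  have hts : tsupport f ⊆ Set.Ioo (-3) 3 := by
    rw [f.tsupport_eq, Real.closedBall_eq_Icc]
    intro x hx
    have h1 : (0 : ℝ) - 2 ≤ x := hx.1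
    have h2 : x ≤ (0 : ℝ) + 2 := hx.2
    exact ⟨by linarith, by linarith⟩
  obtain ⟨M, hM, h1, h2, h3, b0, b1, b2⟩ := airy_bump_facts f f.contDiff f.hasCompactSupport
  refine ⟨f, f.continuous, f.hasCompactSupport, fun _ => f.nonneg, ?_,
    fun z => ENNReal.ofReal (6 * M * (1 + 192 ^ 2) * |(1:ℝ)| * (1 + (1 * z) ^ 2)⁻¹), by fun_prop, ?_, ?_⟩
  · intro ξ hξ
    apply f.one_of_mem_closedBall
    simpa using hξ
  · rw [airy_lint_inv _ _ one_ne_zero (by positivity)]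
    exact ENNReal.ofReal_ne_top
  · intro z r hr
    have hs := airy_scale f hts 1 z r one_ne_zero
    simp only [div_one, abs_one, Complex.ofReal_one, one_mul, one_pow] at hs
    rw [hs, ← ofReal_norm]
    apply ENNReal.ofReal_le_ofReal
    simp only [abs_one, mul_one, one_mul]
    rcases le_or_gt (96 * |r|) |z| with h | h
    · refine (airy_J_decay f M hM h1 h2 h3 b0 b1 b2 hts z r h).trans ?_
      exact mul_le_mul_of_nonneg_right (by linarith) (by positivity)
    · refine (airy_J_trivial f M z r b0).trans ?_
      rw [mul_assoc (6 * M)]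
      apply le_mul_of_one_le_right (by positivity)
      rw [← div_eq_mul_inv, one_le_div (by positivity)]
      have : |z| ≤ 192 := by linarith
      have := sq_le_sq' (by linarith [abs_nonneg z]) this
      rw [sq_abs] at this
      linarith

lemma airy_lint_sqrt (K R : ℝ) (hK : 0 ≤ K) (hR : 0 < R) :
    ∫⁻ z in Set.Ioc 0 R, ENNReal.ofReal (K * z ^ (-(1/2) : ℝ)) = ENNReal.ofReal (K * (2 * Real.sqrt R)) := by
  have i : IntervalIntegrable (fun z : ℝ => K * z ^ (-(1/2) : ℝ)) volume 0 R :=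
    (intervalIntegral.intervalIntegrable_rpow' (by norm_num)).const_mul _
  rw [← ofReal_integral_eq_lintegral_ofReal ((intervalIntegrable_iff_integrableOn_Ioc_of_le hR.le).mp i)]
  · rw [← intervalIntegral.integral_of_le hR.le, intervalIntegral.integral_const_mul,
      integral_rpow (by left; norm_num)]
    congr 2
    rw [Real.sqrt_eq_rpow]
    norm_num
    ring
  · rw [Filter.EventuallyLE, ae_restrict_iff' measurableSet_Ioc]
    refine Filter.Eventually.of_forall fun z hz => ?_
    have := hz.1
    simp only [Pi.zero_apply]
    positivity

/-- The high-frequency kernel. -/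
lemma airy_high : ∃ χ : ℝ → ℝ, Continuous χ ∧ HasCompactSupport χ ∧ (∀ ξ, 0 ≤ χ ξ) ∧
    (∀ ξ, 1 ≤ ξ → ξ ≤ 2 → χ ξ = 1) ∧ ∃ C : ℝ, 0 ≤ C ∧ ∀ N : ℝ, 1 ≤ |N| →
    ∃ Φ : ℝ → ℝ≥0∞, Measurable Φ ∧ ∫⁻ z, Φ z ≤ ENNReal.ofReal (C * (|N| * Real.sqrt |N|)) ∧
      ∀ z r : ℝ, |r| ≤ 2 → ‖∫ ξ, airyPh z r ξ * (χ (ξ / N) : ℂ)‖ₑ ≤ Φ z := by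
  let f : ContDiffBump (3/2 : ℝ) := ⟨1/2, 1, by norm_num, by norm_num⟩
  have hsup : tsupport f ⊆ Set.Icc (1/2) (5/2) := by
    rw [f.tsupport_eq, Real.closedBall_eq_Icc]
    intro x hx
    have h1 : (3/2 : ℝ) - 1 ≤ x := hx.1
    have h2 : x ≤ (3/2 : ℝ) + 1 := hx.2
    exact ⟨by linarith, by linarith⟩
  have hts : tsupport f ⊆ Set.Ioo (-3) 3 := by
    intro x hx
    have := hsup hx
    exact ⟨by linarith [this.1], by linarith [this.2]⟩
  have z0 : f (1/2) = 0 := by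
    apply f.zero_of_le_dist
    rw [Real.dist_eq]
    change (1:ℝ) ≤ _
    norm_num
  have z1 : f 3 = 0 := by
    apply f.zero_of_le_dist
    rw [Real.dist_eq]
    change (1:ℝ) ≤ _
    norm_num
  have zneg : ∀ η ≤ (1/2 : ℝ), f η = 0 := by
    intro η hη
    apply f.zero_of_le_dist
    rw [Real.dist_eq]
    change (1:ℝ) ≤ _
    rw [abs_sub_comm]
    refine le_trans ?_ (le_abs_self _)
    linarith
  obtain ⟨M, hM, h1, h2, h3, b0, b1, b2⟩ := airy_bump_facts f f.contDiff f.hasCompactSupport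
  refine ⟨f, f.continuous, f.hasCompactSupport, fun _ => f.nonneg, ?_,
    156 * M * Real.pi + (60 * M * (2 * 14) + 60 * M * (2 * 14)), by positivity, ?_⟩
  · intro ξ hξ hξ'
    apply f.one_of_mem_closedBall
    rw [Real.closedBall_eq_Icc]
    change ξ ∈ Set.Icc ((3/2 : ℝ) - 1/2) ((3/2 : ℝ) + 1/2)
    exact ⟨by linarith, by linarith⟩
  intro N hN
  have hNpos : 0 < |N| := by linarith
  have hN0 : N ≠ 0 := abs_pos.mp hNpos
  have hSpos := Real.sqrt_pos.mpr hNpos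
  set S := Real.sqrt |N| with hS
  set R : ℝ := 192 * N ^ 2 with hR
  have hRpos : 0 < R := by positivity
  set ψ : ℝ → ℝ≥0∞ := (Set.Ioc 0 R).indicator
    fun z => ENNReal.ofReal (60 * M * S * z ^ (-(1/2) : ℝ)) with hψ
  have mψ : Measurable ψ := by
    apply Measurable.indicator _ measurableSet_Ioc
    fun_prop
  have iψ : ∫⁻ z, ψ z ≤ ENNReal.ofReal (60 * M * (2 * 14) * (|N| * S)) := by
    rw [hψ, lintegral_indicator measurableSet_Ioc, airy_lint_sqrt _ _ (by positivity) hRpos]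
    apply ENNReal.ofReal_le_ofReal
    have : Real.sqrt R ≤ 14 * |N| := by
      rw [Real.sqrt_le_left (by positivity), mul_pow, sq_abs]
      rw [hR]; nlinarith [sq_nonneg N]
    calc 60 * M * S * (2 * Real.sqrt R) ≤ 60 * M * S * (2 * (14 * |N|)) := by gcongr
      _ = _ := by ring
  refine ⟨fun z => ENNReal.ofReal (156 * M * |N| * (1 + (N * z) ^ 2)⁻¹) + (ψ z + ψ (-z))
    + ({0} : Set ℝ).indicator (fun _ => ∞) z, ?_, ?_, ?_⟩
  · refine Measurable.add (Measurable.add (by fun_prop) (mψ.add (mψ.comp measurable_neg))) ?_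
    exact measurable_const.indicator (measurableSet_singleton 0)
  · rw [lintegral_add_right _ (measurable_const.indicator (measurableSet_singleton 0)),
      lintegral_add_left (by fun_prop), lintegral_add_left mψ, lintegral_indicator (measurableSet_singleton 0),
      airy_lint_inv _ _ hN0 (by positivity), lintegral_neg_eq_self (μ := volume) (f := ψ)]
    simp only [Measure.restrict_singleton, Real.volume_singleton, zero_smul, lintegral_zero_measure, add_zero]
    have hS1 : 1 ≤ S := by rw [hS]; exact Real.one_le_sqrt.mpr hN
    rw [add_mul, add_mul, ENNReal.ofReal_add (by positivity) (by positivity), ENNReal.ofReal_add (by positivity) (by positivity)]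
    refine add_le_add (ENNReal.ofReal_le_ofReal ?_) (add_le_add iψ iψ)
    apply le_mul_of_one_le_right (by positivity)
    nlinarith
  · intro z r hr
    by_cases hz : z = 0
    · simp [hz]
    refine le_trans ?_ le_self_add
    have hs := airy_scale f hts N z r hN0
    rw [hs]
    set a := N * z with ha
    set c := N ^ 3 * r with hc
    have hzpos : 0 < |z| := abs_pos.mpr hz
    rw [← ofReal_norm, norm_mul, Complex.norm_real, Real.norm_eq_abs, abs_abs]
    rcases le_or_gt (96 * |c|) |a| with h | h
    · refine le_trans (ENNReal.ofReal_le_ofReal ?_) le_self_add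
      calc _ ≤ |N| * (156 * M * (1 + a ^ 2)⁻¹) := by
            gcongr
            exact airy_J_decay f M hM h1 h2 h3 b0 b1 b2 hts a c h
        _ = _ := by ring
    · refine le_trans ?_ le_add_self
      have hc0 : c ≠ 0 := by
        intro h0; rw [h0] at h; simp at h; linarith [abs_nonneg a]
      have hzR : |z| ≤ R := by
        have e1 : |a| = |N| * |z| := abs_mul _ _
        have e2 : |c| = |N| * N ^ 2 * |r| := by
          rw [hc, abs_mul, abs_pow, ← sq_abs N]; ring
        rw [e1, e2] at h
        have : |N| * |z| ≤ |N| * R := by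
          rw [hR]
          have : 96 * (|N| * N ^ 2 * |r|) ≤ 96 * (|N| * N ^ 2 * 2) := by gcongr
          linarith
        exact le_of_mul_le_mul_left this hNpos
      have eJ : ∫ η in (-3)..3, airyPh a c η * (f η : ℂ) = ∫ η in (1/2)..3, airyPh a c η * (f η : ℂ) := by
        have ci : Continuous fun η => airyPh a c η * (f η : ℂ) := by
          have := airyPh_cont a c
          have := f.continuous
          fun_prop
        rw [← intervalIntegral.integral_add_adjacent_intervals (ci.intervalIntegrable (-3) (1/2)) (ci.intervalIntegrable (1/2) 3)]
        rw [intervalIntegral.integral_congr (g := fun _ => 0)]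
        · simp
        · intro η hη
          rw [Set.uIcc_of_le (by norm_num)] at hη
          simp [zneg η hη.2]
      have bJ : |N| * ‖∫ η in (-3)..3, airyPh a c η * (f η : ℂ)‖ ≤ 60 * M * S * |z| ^ (-(1/2) : ℝ) := by
        rw [eJ]
        have := airy_stat f _ M h1 (continuous_iff_continuousAt.mpr fun η => (h2 η).continuousAt) b0 b1 z0 z1 a c hc0
        have hcp : 0 < Real.sqrt |c| := Real.sqrt_pos.mpr (abs_pos.mpr hc0)
        have q1 : S * Real.sqrt |z| ≤ 10 * Real.sqrt |c| := by
          rw [hS, ← Real.sqrt_mul (abs_nonneg N), ← abs_mul, ← ha]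
          rw [show (10 : ℝ) = Real.sqrt 100 by rw [show (100:ℝ) = 10 ^ 2 by norm_num]; simp,
            ← Real.sqrt_mul (by norm_num)]
          apply Real.sqrt_le_sqrt
          linarith [abs_nonneg c]
        have q2 : |z| ^ (-(1/2) : ℝ) = (Real.sqrt |z|)⁻¹ := by
          rw [Real.rpow_neg hzpos.le, Real.sqrt_eq_rpow]
        have hzs : 0 < Real.sqrt |z| := Real.sqrt_pos.mpr hzpos
        have q3 : |N| = S * S := (Real.mul_self_sqrt hNpos.le).symm
        rw [q2]
        calc _ ≤ |N| * (6 * M / Real.sqrt |c|) := by gcongr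
          _ ≤ _ := by
            rw [q3, ← div_eq_mul_inv, ← mul_div_assoc, div_le_div_iff₀ hcp hzs]
            nlinarith [mul_le_mul_of_nonneg_left q1 (by positivity : 0 ≤ 6 * M * S)]
      refine (ENNReal.ofReal_le_ofReal bJ).trans ?_
      rcases lt_or_gt_of_ne hz with hneg | hpos
      · rw [abs_of_neg hneg] at hzR ⊢
        refine le_trans (le_of_eq ?_) le_add_self
        rw [hψ, Set.indicator_of_mem]
        exact ⟨by linarith, hzR⟩
      · rw [abs_of_pos hpos] at hzR ⊢
        refine le_trans (le_of_eq ?_) le_self_add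
        rw [hψ, Set.indicator_of_mem]
        exact ⟨by linarith, hzR⟩

/-- The oscillating factor along the curve `t = t(x)`. -/
noncomputable def airyOsc (t : ℝ → ℝ) (x : ℝ) (p : ℝ × ℝ) : ℂ :=
  airyPh x (t x) p.1 * Complex.exp (((t x * p.2 : ℝ) : ℂ) * Complex.I)

lemma airyOsc_norm (t : ℝ → ℝ) (x : ℝ) (p : ℝ × ℝ) : ‖airyOsc t x p‖ = 1 := by
  rw [airyOsc, norm_mul, airyPh_norm, Complex.norm_exp_ofReal_mul_I, one_mul]

lemma airyOsc_meas (t : ℝ → ℝ) (ht : Measurable t) :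
    Measurable (fun q : ℝ × (ℝ × ℝ) => airyOsc t q.1 q.2) := by
  unfold airyOsc airyPh
  fun_prop

lemma airyOsc_conj (t : ℝ → ℝ) (x y : ℝ) (p : ℝ × ℝ) :
    airyOsc t x p * (starRingEnd ℂ) (airyOsc t y p) =
      airyPh (x - y) (t x - t y) p.1 * Complex.exp ((((t x - t y) * p.2 : ℝ) : ℂ) * Complex.I) := by
  unfold airyOsc airyPh
  rw [map_mul, ← Complex.exp_conj, ← Complex.exp_conj]
  simp only [map_mul, Complex.conj_I, Complex.conj_ofReal]
  rw [← Complex.exp_add, ← Complex.exp_add, ← Complex.exp_add, ← Complex.exp_add]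
  congr 1
  push_cast
  ring

lemma airy_conj_int (g : ℝ → ℂ) (hgi : Integrable g) :
    Integrable (fun y => (starRingEnd ℂ) (g y)) :=
  Complex.conjCLE.toContinuousLinearMap.integrable_comp hgi

lemma airy_re_int {α : Type*} [MeasureSpace α] (f : α → ℝ)
    (h : Integrable (fun x => ((f x : ℝ) : ℂ))) : Integrable f := by
  have := h.re
  simpa only [RCLike.re_to_complex, Complex.ofReal_re] using this

lemma airyOsc_meas2 (t : ℝ → ℝ) (ht : Measurable t) :
    Measurable (fun w : (ℝ × ℝ) × (ℝ × ℝ) =>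
      airyOsc t w.2.1 w.1 * (starRingEnd ℂ) (airyOsc t w.2.2 w.1)) := by
  have e : ∀ w : (ℝ × ℝ) × (ℝ × ℝ),
      airyOsc t w.2.1 w.1 * (starRingEnd ℂ) (airyOsc t w.2.2 w.1) =
      airyPh (w.2.1 - w.2.2) (t w.2.1 - t w.2.2) w.1.1 *
        Complex.exp ((((t w.2.1 - t w.2.2) * w.1.2 : ℝ) : ℂ) * Complex.I) :=
    fun w => airyOsc_conj t _ _ _
  simp only [e]
  unfold airyPh
  fun_prop

lemma airy_schur (g : ℝ → ℂ) (hg : Measurable g) (Φ : ℝ → ℝ≥0∞) (hΦ : Measurable Φ) :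
    ∫⁻ q : ℝ × ℝ, ‖g q.1‖ₑ * ‖g q.2‖ₑ * Φ (q.1 - q.2) ≤
      2 * (∫⁻ z, Φ z) * ∫⁻ x, ‖g x‖ₑ ^ 2 := by
  have hb : ∀ a b : ℝ≥0∞, a * b ≤ a ^ 2 + b ^ 2 := by
    intro a b
    rcases le_total a b with h | h
    · exact (by rw [sq b]; gcongr : a * b ≤ b ^ 2).trans le_add_self
    · exact (by rw [sq a]; gcongr : a * b ≤ a ^ 2).trans le_self_add
  calc ∫⁻ q : ℝ × ℝ, ‖g q.1‖ₑ * ‖g q.2‖ₑ * Φ (q.1 - q.2)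
      ≤ ∫⁻ q : ℝ × ℝ, (‖g q.1‖ₑ ^ 2 * Φ (q.1 - q.2) + ‖g q.2‖ₑ ^ 2 * Φ (q.1 - q.2)) := by
        apply lintegral_mono
        intro q
        beta_reduce
        rw [← add_mul]
        exact mul_le_mul_left (hb _ _) _
    _ = (∫⁻ q : ℝ × ℝ, ‖g q.1‖ₑ ^ 2 * Φ (q.1 - q.2)) + ∫⁻ q : ℝ × ℝ, ‖g q.2‖ₑ ^ 2 * Φ (q.1 - q.2) := by
        rw [lintegral_add_left (by fun_prop)]
    _ = (∫⁻ x, ‖g x‖ₑ ^ 2) * (∫⁻ z, Φ z) + (∫⁻ x, ‖g x‖ₑ ^ 2) * (∫⁻ z, Φ z) := by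
        rw [Measure.volume_eq_prod]
        congr 1
        · rw [lintegral_prod _ (by fun_prop)]
          rw [← lintegral_mul_const _ (by fun_prop)]
          congr 1; ext x
          dsimp only
          rw [lintegral_const_mul _ (by fun_prop), lintegral_sub_left_eq_self]
        · rw [lintegral_prod_symm _ (by fun_prop)]
          rw [← lintegral_mul_const _ (by fun_prop)]
          congr 1; ext x
          dsimp only
          rw [lintegral_const_mul _ (by fun_prop), lintegral_sub_right_eq_self]
    _ = _ := by ring

lemma airy_piece (t : ℝ → ℝ) (ht : Measurable t) (ht1 : ∀ x, |t x| ≤ 1) (g : ℝ → ℂ)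
    (hg : Measurable g) (hgi : Integrable g) (ψ m : ℝ → ℝ) (hψc : Continuous ψ)
    (hψs : HasCompactSupport ψ) (hψ0 : ∀ ξ, 0 ≤ ψ ξ) (hmi : Integrable m)
    (hm0 : ∀ σ, 0 ≤ m σ) (Φ : ℝ → ℝ≥0∞) (hΦ : Measurable Φ)
    (hK : ∀ z r : ℝ, |r| ≤ 2 → ‖∫ ξ, airyPh z r ξ * (ψ ξ : ℂ)‖ₑ ≤ Φ z) :
    ∫⁻ p : ℝ × ℝ, ENNReal.ofReal (ψ p.1 * m p.2) * ‖∫ x, airyOsc t x p * g x‖ₑ ^ 2 ≤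
      (∫⁻ σ, ENNReal.ofReal (m σ)) * (2 * (∫⁻ z, Φ z) * ∫⁻ x, ‖g x‖ₑ ^ 2) := by
  set H : ℝ × ℝ → ℂ := fun p => ∫ x, airyOsc t x p * g x with hH
  have hψi : Integrable ψ := hψc.integrable_of_hasCompactSupport hψs
  have hω : Integrable (fun p : ℝ × ℝ => ((ψ p.1 * m p.2 : ℝ) : ℂ)) :=
    (hψi.mul_prod hmi).ofReal
  have hgg : Integrable (fun q : ℝ × ℝ => g q.1 * (starRingEnd ℂ) (g q.2)) :=
    hgi.mul_prod (g := fun y => (starRingEnd ℂ) (g y)) (airy_conj_int g hgi)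
  set Ψ : (ℝ × ℝ) × (ℝ × ℝ) → ℂ := fun w =>
    (airyOsc t w.2.1 w.1 * (starRingEnd ℂ) (airyOsc t w.2.2 w.1)) *
      (((ψ w.1.1 * m w.1.2 : ℝ) : ℂ) * (g w.2.1 * (starRingEnd ℂ) (g w.2.2))) with hΨ
  have hΨi : Integrable Ψ (volume.prod volume) := by
    apply (hω.mul_prod hgg).bdd_mul (c := 1)
    · apply Measurable.aestronglyMeasurable
      exact airyOsc_meas2 t ht
    · refine Filter.Eventually.of_forall fun w => ?_
      simp [airyOsc_norm]
  have e1 : ∀ p, ∫ q, Ψ (p, q) = ((ψ p.1 * m p.2 * ‖H p‖ ^ 2 : ℝ) : ℂ) := by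
    intro p
    have := integral_prod_mul (μ := (volume : Measure ℝ)) (ν := (volume : Measure ℝ))
      (fun x => airyOsc t x p * g x) (fun y => (starRingEnd ℂ) (airyOsc t y p * g y))
    rw [integral_conj] at this
    change _ = H p * (starRingEnd ℂ) (H p) at this
    rw [Complex.mul_conj, Complex.normSq_eq_norm_sq] at this
    rw [Complex.ofReal_mul, ← this, ← integral_const_mul]
    rw [← Measure.volume_eq_prod]
    congr 1; ext q
    simp only [hΨ, map_mul]; ring
  have e2 : ∀ q : ℝ × ℝ, ‖∫ p, Ψ (p, q)‖ₑ ≤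
      (∫⁻ σ, ENNReal.ofReal (m σ)) * (‖g q.1‖ₑ * ‖g q.2‖ₑ * Φ (q.1 - q.2)) := by
    intro q
    have : ∫ p, Ψ (p, q) = (∫ ξ, airyPh (q.1 - q.2) (t q.1 - t q.2) ξ * (ψ ξ : ℂ)) *
        (∫ σ, Complex.exp ((((t q.1 - t q.2) * σ : ℝ) : ℂ) * Complex.I) * (m σ : ℂ)) *
        (g q.1 * (starRingEnd ℂ) (g q.2)) := by
      rw [← integral_prod_mul, ← integral_mul_const, ← Measure.volume_eq_prod]
      congr 1; ext p
      simp only [hΨ]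
      rw [airyOsc_conj]
      push_cast; ring
    rw [this, enorm_mul, enorm_mul, enorm_mul]
    have k1 := hK (q.1 - q.2) (t q.1 - t q.2) (by
      have := abs_sub (t q.1) (t q.2)
      linarith [ht1 q.1, ht1 q.2])
    have k2 : ‖∫ σ, Complex.exp ((((t q.1 - t q.2) * σ : ℝ) : ℂ) * Complex.I) * (m σ : ℂ)‖ₑ ≤
        ∫⁻ σ, ENNReal.ofReal (m σ) := by
      refine (enorm_integral_le_lintegral_enorm _).trans (lintegral_mono fun σ => ?_)
      rw [← ofReal_norm, norm_mul, Complex.norm_exp_ofReal_mul_I, one_mul, Complex.norm_real,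
        Real.norm_of_nonneg (hm0 σ)]
    have k3 : ‖(starRingEnd ℂ) (g q.2)‖ₑ = ‖g q.2‖ₑ := by
      rw [← ofReal_norm, RCLike.norm_conj, ofReal_norm]
    rw [k3]
    calc _ ≤ Φ (q.1 - q.2) * (∫⁻ σ, ENNReal.ofReal (m σ)) * (‖g q.1‖ₑ * ‖g q.2‖ₑ) := by gcongr
      _ = _ := by ring
  have hi1 : Integrable (fun p => ((ψ p.1 * m p.2 * ‖H p‖ ^ 2 : ℝ) : ℂ)) := by
    have := hΨi.integral_prod_left
    simpa only [e1] using this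
  have hi2 : Integrable (fun p => (ψ p.1 * m p.2 * ‖H p‖ ^ 2 : ℝ)) := by
    exact airy_re_int _ hi1
  calc ∫⁻ p : ℝ × ℝ, ENNReal.ofReal (ψ p.1 * m p.2) * ‖H p‖ₑ ^ 2
      = ∫⁻ p : ℝ × ℝ, ENNReal.ofReal (ψ p.1 * m p.2 * ‖H p‖ ^ 2) := by
        congr 1; ext p
        rw [ENNReal.ofReal_mul (mul_nonneg (hψ0 _) (hm0 _)), ENNReal.ofReal_pow (norm_nonneg _),
          ofReal_norm]
    _ = ENNReal.ofReal (∫ p : ℝ × ℝ, ψ p.1 * m p.2 * ‖H p‖ ^ 2) := by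
        rw [ofReal_integral_eq_lintegral_ofReal hi2]
        exact Filter.Eventually.of_forall fun p =>
          mul_nonneg (mul_nonneg (hψ0 _) (hm0 _)) (sq_nonneg _)
    _ ≤ ‖∫ p, ∫ q, Ψ (p, q)‖ₑ := by
        simp only [e1]
        rw [integral_complex_ofReal, ← ofReal_norm, Complex.norm_real]
        exact ENNReal.ofReal_le_ofReal (le_abs_self _)
    _ = ‖∫ q, ∫ p, Ψ (p, q)‖ₑ := by
        rw [integral_integral_swap (f := fun p q => Ψ (p, q)) hΨi]
    _ ≤ ∫⁻ q : ℝ × ℝ, (∫⁻ σ, ENNReal.ofReal (m σ)) * (‖g q.1‖ₑ * ‖g q.2‖ₑ * Φ (q.1 - q.2)) :=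
        (enorm_integral_le_lintegral_enorm _).trans (lintegral_mono e2)
    _ = (∫⁻ σ, ENNReal.ofReal (m σ)) * ∫⁻ q : ℝ × ℝ, (‖g q.1‖ₑ * ‖g q.2‖ₑ * Φ (q.1 - q.2)) := by
        rw [lintegral_const_mul _ (by fun_prop)]
    _ ≤ _ := by
        gcongr
        exact airy_schur g hg Φ hΦ

lemma airy_dual (s b : ℝ) (hs : 3 / 4 < s) (hb : 1 / 2 < b) :
    ∃ C : ℝ≥0∞, C ≠ ∞ ∧ ∀ t : ℝ → ℝ, Measurable t → (∀ x, |t x| ≤ 1) → ∀ g : ℝ → ℂ,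
      Measurable g → Integrable g →
      ∫⁻ p : ℝ × ℝ, ENNReal.ofReal ((1 + |p.1|) ^ (-(2 * s)) * (1 + |p.2|) ^ (-(2 * b))) *
        ‖∫ x, airyOsc t x p * g x‖ₑ ^ 2 ≤ C * ∫⁻ x, ‖g x‖ₑ ^ 2 := by
  obtain ⟨χ0, c0, s0, p0, one0, Φ0, mΦ0, iΦ0, hΦ0⟩ := airy_low
  obtain ⟨χ, c1, s1, p1, one1, C, hC, hhigh⟩ := airy_high
  have hN1 : ∀ k : ℕ, 1 ≤ |(2:ℝ) ^ k| := fun k => by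
    rw [abs_of_pos (by positivity)]; exact one_le_pow₀ (by norm_num)
  have hN2 : ∀ k : ℕ, 1 ≤ |-(2:ℝ) ^ k| := fun k => by rw [abs_neg]; exact hN1 k
  choose ΦP mΦP iΦP hΦP using fun k : ℕ => hhigh ((2:ℝ) ^ k) (hN1 k)
  choose ΦM mΦM iΦM hΦM using fun k : ℕ => hhigh (-(2:ℝ) ^ k) (hN2 k)
  set m : ℝ → ℝ := fun σ => (1 + |σ|) ^ (-(2 * b)) with hm
  have hmi : Integrable m := by
    have := integrable_one_add_norm (E := ℝ) (μ := volume) (r := 2 * b) (by simp; linarith)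
    simpa using this
  have hm0 : ∀ σ, 0 ≤ m σ := fun σ => by simp only [hm]; positivity
  set I := ∫⁻ σ, ENNReal.ofReal (m σ) with hI
  have hIfin : I ≠ ∞ := by
    rw [hI, ← ofReal_integral_eq_lintegral_ofReal hmi (Filter.Eventually.of_forall hm0)]
    exact ENNReal.ofReal_ne_top
  set ρ : ℝ := 2 ^ (-(2 * s)) with hρ
  have hρ0 : 0 < ρ := by positivity
  set D : ℝ≥0∞ := ∑' k : ℕ, ENNReal.ofReal (C * (ρ * (2 * Real.sqrt 2)) ^ k) with hD
  have hlt : ρ * (2 * Real.sqrt 2) < 1 := by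
    have : (2:ℝ) * Real.sqrt 2 = 2 ^ (3/2 : ℝ) := by
      rw [Real.sqrt_eq_rpow, show (3/2 : ℝ) = 1 + 1/2 by norm_num, Real.rpow_add (by norm_num),
        Real.rpow_one]
    rw [this, hρ, ← Real.rpow_add (by norm_num)]
    exact Real.rpow_lt_one_of_one_lt_of_neg (by norm_num) (by linarith)
  have hDfin : D ≠ ∞ := by
    apply Summable.tsum_ofReal_ne_top
    exact (summable_geometric_of_lt_one (by positivity) hlt).mul_left C
  have hterm : ∀ k : ℕ, ENNReal.ofReal (ρ ^ k) *
      ENNReal.ofReal (C * (|(2:ℝ) ^ k| * Real.sqrt |(2:ℝ) ^ k|)) =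
        ENNReal.ofReal (C * (ρ * (2 * Real.sqrt 2)) ^ k) := by
    intro k
    rw [← ENNReal.ofReal_mul (by positivity), abs_of_pos (by positivity)]
    congr 1
    have : Real.sqrt ((2:ℝ) ^ k) = Real.sqrt 2 ^ k := by
      rw [Real.sqrt_eq_iff_mul_self_eq (by positivity) (by positivity), ← mul_pow,
        Real.mul_self_sqrt (by norm_num)]
    rw [this, mul_pow, mul_pow]; ring
  refine ⟨I * (2 * ∫⁻ z, Φ0 z) + (I * (2 * D) + I * (2 * D)), ?_, ?_⟩
  · have : ∀ x : ℝ≥0∞, x ≠ ∞ → I * (2 * x) ≠ ∞ := fun x hx =>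
      ENNReal.mul_ne_top hIfin (ENNReal.mul_ne_top (by norm_num) hx)
    exact ENNReal.add_ne_top.mpr ⟨this _ iΦ0, ENNReal.add_ne_top.mpr ⟨this _ hDfin, this _ hDfin⟩⟩
  intro t ht ht1 g hg hgi
  have scomp : ∀ N : ℝ, N ≠ 0 → HasCompactSupport fun ξ => χ (ξ / N) := fun N hN =>
    s1.comp_homeomorph (Homeomorph.mulRight₀ N⁻¹ (inv_ne_zero hN))
  have pieceP := fun k : ℕ => airy_piece t ht ht1 g hg hgi (fun ξ => χ (ξ / (2:ℝ) ^ k)) m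
    (by fun_prop) (scomp _ (by positivity)) (fun _ => p1 _) hmi hm0 (ΦP k) (mΦP k) (hΦP k)
  have pieceM := fun k : ℕ => airy_piece t ht ht1 g hg hgi (fun ξ => χ (ξ / -(2:ℝ) ^ k)) m
    (by fun_prop) (scomp _ (by simp)) (fun _ => p1 _) hmi hm0 (ΦM k) (mΦM k) (hΦM k)
  have piece0 := airy_piece t ht ht1 g hg hgi χ0 m c0 s0 p0 hmi hm0 Φ0 mΦ0 hΦ0
  set H : ℝ × ℝ → ℝ≥0∞ := fun p => ‖∫ x, airyOsc t x p * g x‖ₑ ^ 2 with hH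
  set A := ∫⁻ x, ‖g x‖ₑ ^ 2 with hA
  have mH : Measurable H := by
    have : StronglyMeasurable fun p : ℝ × ℝ => ∫ x, airyOsc t x p * g x := by
      apply StronglyMeasurable.integral_prod_right (f := fun (p : ℝ × ℝ) (x : ℝ) => airyOsc t x p * g x)
      apply Measurable.stronglyMeasurable
      exact ((airyOsc_meas t ht).comp measurable_swap).mul (hg.comp measurable_snd)
    exact this.measurable.enorm.pow_const 2
  have mm : Measurable m := by simp only [hm]; fun_prop
  have mχ : Measurable χ := c1.measurable
  have mχ0 : Measurable χ0 := c0.measurable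
  have ptw : ∀ p : ℝ × ℝ, ENNReal.ofReal ((1 + |p.1|) ^ (-(2 * s)) * m p.2) ≤
      ENNReal.ofReal (χ0 p.1 * m p.2) +
      ((∑' k : ℕ, ENNReal.ofReal (ρ ^ k) * ENNReal.ofReal (χ (p.1 / (2:ℝ) ^ k) * m p.2)) +
      ∑' k : ℕ, ENNReal.ofReal (ρ ^ k) * ENNReal.ofReal (χ (p.1 / -(2:ℝ) ^ k) * m p.2)) := by
    intro p
    rcases le_or_gt |p.1| 1 with h | h
    · refine le_trans (ENNReal.ofReal_le_ofReal ?_) le_self_add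
      rw [one0 _ h]
      refine mul_le_mul_of_nonneg_right ?_ (hm0 _)
      exact Real.rpow_le_one_of_one_le_of_nonpos (by linarith [abs_nonneg p.1]) (by linarith)
    · refine le_trans ?_ le_add_self
      obtain ⟨k, hk1, hk2⟩ := exists_nat_pow_near h.le (by norm_num : (1:ℝ) < 2)
      have hpk : (0:ℝ) < 2 ^ k := by positivity
      have hw : (1 + |p.1|) ^ (-(2 * s)) ≤ ρ ^ k := by
        calc (1 + |p.1|) ^ (-(2 * s)) ≤ ((2:ℝ) ^ k) ^ (-(2 * s)) :=
              Real.rpow_le_rpow_of_nonpos hpk (by linarith) (by linarith)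
          _ = ρ ^ k := by
              rw [hρ, ← Real.rpow_natCast, ← Real.rpow_natCast, ← Real.rpow_mul (by norm_num),
                ← Real.rpow_mul (by norm_num), mul_comm]
      have hq1 : 1 ≤ |p.1| / 2 ^ k := by rwa [one_le_div hpk]
      have hq2 : |p.1| / 2 ^ k ≤ 2 := by
        rw [div_le_iff₀ hpk]; rw [pow_succ] at hk2; linarith
      have hfin : ∀ N : ℝ, χ (p.1 / N) = 1 → ENNReal.ofReal ((1 + |p.1|) ^ (-(2 * s)) * m p.2) ≤
          ENNReal.ofReal (ρ ^ k) * ENNReal.ofReal (χ (p.1 / N) * m p.2) := by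
        intro N hN
        rw [hN, one_mul, ← ENNReal.ofReal_mul (by positivity)]
        apply ENNReal.ofReal_le_ofReal
        exact mul_le_mul_of_nonneg_right hw (hm0 _)
      rcases le_or_gt 0 p.1 with h0 | h0
      · rw [abs_of_nonneg h0] at hq1 hq2
        refine (hfin _ (one1 _ hq1 hq2)).trans (le_trans ?_ le_self_add)
        exact ENNReal.le_tsum (f := fun k : ℕ => ENNReal.ofReal (ρ ^ k) * ENNReal.ofReal (χ (p.1 / (2:ℝ) ^ k) * m p.2)) k
      · rw [abs_of_neg h0, neg_div] at hq1 hq2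
        refine (hfin (-2 ^ k) (one1 _ (by rw [div_neg]; exact hq1) (by rw [div_neg]; exact hq2))).trans (le_trans ?_ le_add_self)
        exact ENNReal.le_tsum (f := fun k : ℕ => ENNReal.ofReal (ρ ^ k) * ENNReal.ofReal (χ (p.1 / -(2:ℝ) ^ k) * m p.2)) k
  have hsum : ∀ (ψ : ℕ → ℝ → ℝ) (Φ : ℕ → ℝ → ℝ≥0∞), (∀ k, Measurable (ψ k)) →
      (∀ k, ∫⁻ p : ℝ × ℝ, ENNReal.ofReal (ψ k p.1 * m p.2) * H p ≤ I * (2 * (∫⁻ z, Φ k z) * A)) →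
      (∀ k, ∫⁻ z, Φ k z ≤ ENNReal.ofReal (C * (|(2:ℝ) ^ k| * Real.sqrt |(2:ℝ) ^ k|))) →
      ∫⁻ p : ℝ × ℝ, (∑' k : ℕ, ENNReal.ofReal (ρ ^ k) * ENNReal.ofReal (ψ k p.1 * m p.2)) * H p
        ≤ I * (2 * D) * A := by
    intro ψ Φ mψ h1 h2
    calc _ = ∫⁻ p : ℝ × ℝ, ∑' k : ℕ, ENNReal.ofReal (ρ ^ k) * (ENNReal.ofReal (ψ k p.1 * m p.2) * H p) := by
          congr 1; ext p
          rw [← ENNReal.tsum_mul_right]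
          simp only [mul_assoc]
      _ = ∑' k : ℕ, ∫⁻ p : ℝ × ℝ, ENNReal.ofReal (ρ ^ k) * (ENNReal.ofReal (ψ k p.1 * m p.2) * H p) := by
          rw [lintegral_tsum]
          intro k
          have := mψ k
          fun_prop
      _ ≤ ∑' k : ℕ, I * 2 * A * ENNReal.ofReal (C * (ρ * (2 * Real.sqrt 2)) ^ k) := by
          refine ENNReal.tsum_le_tsum fun k => ?_
          have := mψ k
          rw [lintegral_const_mul _ (by fun_prop), ← hterm k]
          calc _ ≤ ENNReal.ofReal (ρ ^ k) * (I * (2 * ENNReal.ofReal (C * (|(2:ℝ) ^ k| * Real.sqrt |(2:ℝ) ^ k|)) * A)) := by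
                gcongr
                exact (h1 k).trans (by gcongr; exact h2 k)
            _ = _ := by ring
      _ = _ := by
          rw [ENNReal.tsum_mul_left]; ring
  have mt1 : ∀ (ψ : ℕ → ℝ → ℝ), (∀ k, Measurable (ψ k)) → Measurable fun p : ℝ × ℝ =>
      (∑' k : ℕ, ENNReal.ofReal (ρ ^ k) * ENNReal.ofReal (ψ k p.1 * m p.2)) * H p := by
    intro ψ mψ
    refine Measurable.mul (Measurable.tsum fun k => ?_) mH
    have := mψ k
    fun_prop
  calc ∫⁻ p : ℝ × ℝ, ENNReal.ofReal ((1 + |p.1|) ^ (-(2 * s)) * m p.2) * H p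
      ≤ ∫⁻ p : ℝ × ℝ, (ENNReal.ofReal (χ0 p.1 * m p.2) * H p +
      ((∑' k : ℕ, ENNReal.ofReal (ρ ^ k) * ENNReal.ofReal (χ (p.1 / (2:ℝ) ^ k) * m p.2)) * H p +
      (∑' k : ℕ, ENNReal.ofReal (ρ ^ k) * ENNReal.ofReal (χ (p.1 / -(2:ℝ) ^ k) * m p.2)) * H p)) := by
        apply lintegral_mono
        intro p
        beta_reduce
        rw [← add_mul, ← add_mul]
        exact mul_le_mul_left (ptw p) _
    _ = (∫⁻ p : ℝ × ℝ, ENNReal.ofReal (χ0 p.1 * m p.2) * H p) +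
        ((∫⁻ p : ℝ × ℝ, (∑' k : ℕ, ENNReal.ofReal (ρ ^ k) * ENNReal.ofReal (χ (p.1 / (2:ℝ) ^ k) * m p.2)) * H p) +
        ∫⁻ p : ℝ × ℝ, (∑' k : ℕ, ENNReal.ofReal (ρ ^ k) * ENNReal.ofReal (χ (p.1 / -(2:ℝ) ^ k) * m p.2)) * H p) := by
        rw [lintegral_add_left (by fun_prop),
          lintegral_add_left (mt1 (fun k ξ => χ (ξ / (2:ℝ) ^ k)) (fun k => by fun_prop))]
    _ ≤ I * (2 * (∫⁻ z, Φ0 z) * A) + (I * (2 * D) * A + I * (2 * D) * A) := by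
        refine add_le_add piece0 (add_le_add ?_ ?_)
        · exact hsum (fun k ξ => χ (ξ / (2:ℝ) ^ k)) ΦP (fun k => by fun_prop) pieceP iΦP
        · refine hsum (fun k ξ => χ (ξ / -(2:ℝ) ^ k)) ΦM (fun k => by fun_prop) pieceM ?_
          intro k
          have := iΦM k
          rwa [abs_neg] at this
    _ = _ := by ring

lemma airy_core (s b : ℝ) (hs : 3 / 4 < s) (hb : 1 / 2 < b) :
    ∃ C : ℝ≥0∞, C ≠ ∞ ∧ ∀ t : ℝ → ℝ, Measurable t → (∀ x, |t x| ≤ 1) → ∀ F : ℝ × ℝ → ℂ,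
      Measurable F → Integrable F → ∀ u : ℝ → ℂ, Measurable u → Integrable u →
      (∀ x, u x = ∫ p, airyOsc t x p * F p) →
      ∫⁻ x, ‖u x‖ₑ ^ 2 ≤ C *
        ∫⁻ p : ℝ × ℝ, ENNReal.ofReal ((1 + |p.1|) ^ (2 * s) * (1 + |p.2|) ^ (2 * b)) * ‖F p‖ₑ ^ 2 := by
  obtain ⟨C, hC, hdual⟩ := airy_dual s b hs hb
  refine ⟨C, hC, ?_⟩
  intro t ht ht1 F hF hFi u hu hui huF
  set g : ℝ → ℂ := fun x => (starRingEnd ℂ) (u x) with hg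
  have mg : Measurable g := Complex.continuous_conj.measurable.comp hu
  have ig : Integrable g := airy_conj_int u hui
  have hdual' := hdual t ht ht1 g mg ig
  have hgu : ∀ x, ‖g x‖ₑ = ‖u x‖ₑ := fun x => by
    simp only [hg]; rw [← ofReal_norm, RCLike.norm_conj, ofReal_norm]
  simp only [hgu] at hdual'
  set H : ℝ × ℝ → ℂ := fun p => ∫ x, airyOsc t x p * g x with hH
  have mH : Measurable H := by
    have : StronglyMeasurable fun p : ℝ × ℝ => ∫ x, airyOsc t x p * g x := by
      apply StronglyMeasurable.integral_prod_right (f := fun (p : ℝ × ℝ) (x : ℝ) => airyOsc t x p * g x)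
      apply Measurable.stronglyMeasurable
      exact ((airyOsc_meas t ht).comp measurable_swap).mul (mg.comp measurable_snd)
    exact this.measurable
  set A := ∫⁻ x, ‖u x‖ₑ ^ 2 with hA
  set X := ∫⁻ p : ℝ × ℝ, ENNReal.ofReal ((1 + |p.1|) ^ (2 * s) * (1 + |p.2|) ^ (2 * b)) * ‖F p‖ₑ ^ 2 with hX
  have ubd : ∀ x, ‖u x‖ ≤ ∫ p, ‖F p‖ := by
    intro x
    rw [huF x]
    refine (norm_integral_le_integral_norm _).trans (le_of_eq ?_)
    congr 1; ext p
    rw [norm_mul, airyOsc_norm, one_mul]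
  have iuu : Integrable (fun x => u x * g x) :=
    ig.bdd_mul (c := ∫ p, ‖F p‖) hu.aestronglyMeasurable (Filter.Eventually.of_forall ubd)
  have euu : ∀ x, u x * g x = ((‖u x‖ ^ 2 : ℝ) : ℂ) := by
    intro x
    simp only [hg]
    rw [Complex.mul_conj, Complex.normSq_eq_norm_sq]
  have iuu2 : Integrable (fun x => ‖u x‖ ^ 2) := by
    simp only [euu] at iuu
    exact airy_re_int _ iuu
  have hA1 : A = ENNReal.ofReal (∫ x, ‖u x‖ ^ 2) := by
    rw [ofReal_integral_eq_lintegral_ofReal iuu2 (Filter.Eventually.of_forall fun x => sq_nonneg _)]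
    refine lintegral_congr fun x => ?_
    rw [ENNReal.ofReal_pow (norm_nonneg _), ofReal_norm]
  have hAfin : A ≠ ∞ := by rw [hA1]; exact ENNReal.ofReal_ne_top
  have hA2 : A ≤ ‖∫ x, u x * g x‖ₑ := by
    simp only [euu]
    rw [integral_complex_ofReal, ← ofReal_norm, Complex.norm_real, hA1]
    exact ENNReal.ofReal_le_ofReal (le_abs_self _)
  have hfub : ∫ x, u x * g x = ∫ p, F p * H p := by
    calc ∫ x, u x * g x = ∫ x, ∫ p, airyOsc t x p * (g x * F p) := by
          congr 1; ext x
          rw [huF x, ← integral_mul_const]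
          congr 1; ext p; ring
      _ = ∫ p, ∫ x, airyOsc t x p * (g x * F p) := by
          apply integral_integral_swap (f := fun x p => airyOsc t x p * (g x * F p))
          apply (ig.mul_prod hFi).bdd_mul (c := 1)
          · exact (airyOsc_meas t ht).aestronglyMeasurable
          · exact Filter.Eventually.of_forall fun w => (airyOsc_norm _ _ _).le
      _ = _ := by
          congr 1; ext p
          simp only [hH]
          rw [← integral_const_mul]
          congr 1; ext x; ring
  have hA3 : A ≤ ∫⁻ p, ‖F p‖ₑ * ‖H p‖ₑ := by
    refine hA2.trans ?_
    rw [hfub]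
    refine (enorm_integral_le_lintegral_enorm _).trans (le_of_eq ?_)
    simp only [enorm_mul]
  set w : ℝ × ℝ → ℝ := fun p => (1 + |p.1|) ^ (2 * s) * (1 + |p.2|) ^ (2 * b) with hw
  have hw0 : ∀ p, 0 < w p := fun p => by simp only [hw]; positivity
  have mw : Measurable w := by simp only [hw]; fun_prop
  have hwinv : ∀ p : ℝ × ℝ, (1 + |p.1|) ^ (-(2 * s)) * (1 + |p.2|) ^ (-(2 * b)) = (w p)⁻¹ := by
    intro p
    rw [Real.rpow_neg (by positivity), Real.rpow_neg (by positivity), ← mul_inv]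
  simp only [hwinv] at hdual'
  have hold := ENNReal.lintegral_mul_le_Lp_mul_Lq (volume : Measure (ℝ × ℝ)) Real.HolderConjugate.two_two
    (f := fun p => ENNReal.ofReal (Real.sqrt (w p)) * ‖F p‖ₑ)
    (g := fun p => ENNReal.ofReal (Real.sqrt (w p)⁻¹) * ‖H p‖ₑ)
    (by fun_prop) (by fun_prop)
  have hprod : ∀ p, ENNReal.ofReal (Real.sqrt (w p)) * ‖F p‖ₑ *
      (ENNReal.ofReal (Real.sqrt (w p)⁻¹) * ‖H p‖ₑ) = ‖F p‖ₑ * ‖H p‖ₑ := by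
    intro p
    have : ENNReal.ofReal (Real.sqrt (w p)) * ENNReal.ofReal (Real.sqrt (w p)⁻¹) = 1 := by
      rw [← ENNReal.ofReal_mul (by positivity), ← Real.sqrt_mul (hw0 p).le,
        mul_inv_cancel₀ (hw0 p).ne', Real.sqrt_one, ENNReal.ofReal_one]
    calc _ = ENNReal.ofReal (Real.sqrt (w p)) * ENNReal.ofReal (Real.sqrt (w p)⁻¹) * (‖F p‖ₑ * ‖H p‖ₑ) := by ring
      _ = _ := by rw [this, one_mul]
  have hsq : ∀ (v : ℝ) (e : ℝ≥0∞), 0 ≤ v → (ENNReal.ofReal (Real.sqrt v) * e) ^ (2:ℝ) = ENNReal.ofReal v * e ^ 2 := by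
    intro v e hv
    rw [ENNReal.rpow_two, mul_pow, ← ENNReal.ofReal_pow (Real.sqrt_nonneg _), Real.sq_sqrt hv]
  simp only [Pi.mul_apply, hprod] at hold
  have r1 : ∀ p, (ENNReal.ofReal (Real.sqrt (w p)) * ‖F p‖ₑ) ^ (2:ℝ) = ENNReal.ofReal (w p) * ‖F p‖ₑ ^ 2 :=
    fun p => hsq _ _ (hw0 p).le
  have r2 : ∀ p, (ENNReal.ofReal (Real.sqrt (w p)⁻¹) * ‖H p‖ₑ) ^ (2:ℝ) = ENNReal.ofReal (w p)⁻¹ * ‖H p‖ₑ ^ 2 :=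
    fun p => hsq _ _ (inv_nonneg.mpr (hw0 p).le)
  simp only [r1, r2] at hold
  have hA4 : A ≤ X ^ (1 / (2:ℝ)) * (C * A) ^ (1 / (2:ℝ)) :=
    hA3.trans (hold.trans (by gcongr))
  have hA5 : A ^ 2 ≤ X * (C * A) := by
    calc A ^ 2 ≤ (X ^ (1 / (2:ℝ)) * (C * A) ^ (1 / (2:ℝ))) ^ 2 := by gcongr
      _ = _ := by
        rw [mul_pow, ← ENNReal.rpow_two, ← ENNReal.rpow_two, ← ENNReal.rpow_mul, ← ENNReal.rpow_mul]
        norm_num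
  by_cases hA0 : A = 0
  · rw [hA0]; exact zero_le
  · have : A * A ≤ A * (C * X) := by
      calc A * A = A ^ 2 := (sq A).symm
        _ ≤ _ := hA5
        _ = _ := by ring
    exact (ENNReal.mul_le_mul_iff_right hA0 hAfin).mp this

open FourierTransform in
lemma airy_fourier (U : SchwartzMap (ℝ × ℝ) ℂ) :
    ∃ G : SchwartzMap (ℝ × ℝ) ℂ,
      (∀ p : ℝ × ℝ, (∫ q : ℝ × ℝ, Complex.exp (-Complex.I * (q.1 * p.1 + q.2 * p.2)) * U q) = G p) ∧
      ∀ x t : ℝ, U (x, t) = ((((2 * Real.pi) ^ 2)⁻¹ : ℝ) : ℂ) *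
        ∫ p : ℝ × ℝ, Complex.exp (((x * p.1 + t * p.2 : ℝ) : ℂ) * Complex.I) * G p := by
  have hpi : (2 * Real.pi) ≠ 0 := by positivity
  set L := WithLp.prodContinuousLinearEquiv 2 ℝ ℝ ℝ with hL
  set V : SchwartzMap (WithLp 2 (ℝ × ℝ)) ℂ := SchwartzMap.compCLMOfContinuousLinearEquiv ℂ L U with hV
  set W : SchwartzMap (WithLp 2 (ℝ × ℝ)) ℂ := 𝓕 V with hW
  let S : (ℝ × ℝ) ≃L[ℝ] (ℝ × ℝ) := ContinuousLinearEquiv.smulLeft (Units.mk0 (2 * Real.pi)⁻¹ (inv_ne_zero hpi))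
  refine ⟨SchwartzMap.compCLMOfContinuousLinearEquiv ℂ (S.trans L.symm) W, ?_, ?_⟩
  · intro p
    have e1 : (SchwartzMap.compCLMOfContinuousLinearEquiv ℂ (S.trans L.symm) W) p =
        W (WithLp.toLp 2 ((2 * Real.pi)⁻¹ • p)) := rfl
    rw [e1, hW, SchwartzMap.fourier_coe, Real.fourier_eq',
      ← (WithLp.volume_preserving_toLp ℝ ℝ).integral_comp
        (MeasurableEquiv.toLp 2 (ℝ × ℝ)).measurableEmbedding]
    refine integral_congr_ae (Filter.Eventually.of_forall fun q => ?_)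
    have e2 : V (WithLp.toLp 2 q) = U q := rfl
    simp only [e2, WithLp.prod_inner_apply, smul_eq_mul]
    congr 2
    simp
    field_simp
  · intro x t
    have e1 : ∀ p, (SchwartzMap.compCLMOfContinuousLinearEquiv ℂ (S.trans L.symm) W) p =
        W (WithLp.toLp 2 ((2 * Real.pi)⁻¹ • p)) := fun _ => rfl
    have e2 : V (WithLp.toLp 2 (x, t)) = U (x, t) := rfl
    have e3 : 𝓕⁻ W = V := by rw [hW]; exact FourierTransform.fourierInv_fourier_eq V
    rw [← e2, ← e3, SchwartzMap.fourierInv_coe, Real.fourierInv_eq',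
      ← (WithLp.volume_preserving_toLp ℝ ℝ).integral_comp
        (MeasurableEquiv.toLp 2 (ℝ × ℝ)).measurableEmbedding]
    have := Measure.integral_comp_inv_smul (volume : Measure (ℝ × ℝ))
      (fun p : ℝ × ℝ => Complex.exp (((2 * Real.pi * (x * p.1 + t * p.2) : ℝ) : ℂ) * Complex.I) *
        W (WithLp.toLp 2 p)) (2 * Real.pi)
    have e4 : ∫ p : ℝ × ℝ, Complex.exp (((x * p.1 + t * p.2 : ℝ) : ℂ) * Complex.I) *
        (SchwartzMap.compCLMOfContinuousLinearEquiv ℂ (S.trans L.symm) W) p =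
        (((2 * Real.pi) ^ 2 : ℝ) : ℂ) * ∫ p : ℝ × ℝ,
        Complex.exp (((2 * Real.pi * (x * p.1 + t * p.2) : ℝ) : ℂ) * Complex.I) *
        W (WithLp.toLp 2 p) := by
      rw [abs_of_pos (by positivity), Complex.real_smul] at this
      have hf : Module.finrank ℝ (ℝ × ℝ) = 2 := by simp
      rw [hf] at this
      rw [← this]
      refine integral_congr_ae (Filter.Eventually.of_forall fun p => ?_)
      simp only [e1]
      congr 4
      simp
      field_simp
    rw [e4, ← mul_assoc, ← Complex.ofReal_mul, inv_mul_cancel₀ (by positivity), Complex.ofReal_one,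
      one_mul]
    refine integral_congr_ae (Filter.Eventually.of_forall fun q => ?_)
    simp only [WithLp.prod_inner_apply, smul_eq_mul]
    congr 4

lemma airy_decay (G : SchwartzMap (ℝ × ℝ) ℂ) (n : ℕ) :
    ∃ C : ℝ, ∀ p, ‖G p‖ ≤ C * (1 + ‖p‖) ^ (-(n : ℝ)) := by
  refine ⟨2 ^ n * (Finset.Iic (n, 0)).sup (fun m => SchwartzMap.seminorm ℝ m.1 m.2) G, fun p => ?_⟩
  have := SchwartzMap.one_add_le_sup_seminorm_apply (𝕜 := ℝ) (m := (n, 0)) (le_refl n) (le_refl 0) G p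
  rw [norm_iteratedFDeriv_zero] at this
  rw [Real.rpow_neg (by positivity), Real.rpow_natCast, ← div_eq_mul_inv, le_div_iff₀ (by positivity), mul_comm]
  exact this

lemma airy_weight (s b : ℝ) (hs : 0 ≤ s) (hb : 0 ≤ b) (G : SchwartzMap (ℝ × ℝ) ℂ) :
    Integrable (fun p : ℝ × ℝ => (1 + |p.1|) ^ (2 * s) * (1 + |p.2 - p.1 ^ 3|) ^ (2 * b) *
      ‖G p‖ ^ 2) := by
  obtain ⟨n, hn⟩ := exists_nat_gt (2 * s + 3 * (2 * b) + 3)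
  obtain ⟨C, hC⟩ := airy_decay G n
  have hi := (integrable_one_add_norm (E := ℝ × ℝ) (μ := volume) (r := 3) (by simp; norm_num)).const_mul
    (C ^ 2)
  refine hi.mono' ?_ (Filter.Eventually.of_forall fun p => ?_)
  · have := G.continuous.measurable
    apply Measurable.aestronglyMeasurable
    fun_prop
  rw [Real.norm_of_nonneg (by positivity)]
  set r := 1 + ‖p‖ with hr
  have hr1 : 1 ≤ r := by have := norm_nonneg p; linarith
  have h1 : |p.1| ≤ ‖p‖ := norm_fst_le p
  have h2 : |p.2| ≤ ‖p‖ := norm_snd_le p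
  have a1 : (1 + |p.1|) ^ (2 * s) ≤ r ^ (2 * s) :=
    Real.rpow_le_rpow (by positivity) (by linarith) (by linarith)
  have a2 : 1 + |p.2 - p.1 ^ 3| ≤ r ^ (3:ℝ) := by
    have h3 : |p.2 - p.1 ^ 3| ≤ |p.2| + |p.1| ^ 3 := by
      rw [← abs_pow]; exact abs_sub _ _
    have h4 : |p.1| ^ 3 ≤ ‖p‖ ^ 3 := by gcongr
    have : r ^ (3:ℝ) = r ^ 3 := by exact_mod_cast Real.rpow_natCast r 3
    rw [this, hr]
    nlinarith [norm_nonneg p, sq_nonneg ‖p‖]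
  have a3 : (1 + |p.2 - p.1 ^ 3|) ^ (2 * b) ≤ r ^ (3 * (2 * b)) := by
    rw [Real.rpow_mul (zero_le_one.trans hr1)]
    exact Real.rpow_le_rpow (by positivity) a2 (by linarith)
  have a4 : ‖G p‖ ^ 2 ≤ C ^ 2 * r ^ (-(n : ℝ)) := by
    calc ‖G p‖ ^ 2 ≤ (C * r ^ (-(n : ℝ))) ^ 2 := by gcongr; exact hC p
      _ = C ^ 2 * (r ^ (-(n : ℝ)) * r ^ (-(n : ℝ))) := by ring
      _ ≤ C ^ 2 * (1 * r ^ (-(n : ℝ))) := by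
          gcongr
          exact Real.rpow_le_one_of_one_le_of_nonpos hr1 (by simp)
      _ = _ := by ring
  calc _ ≤ r ^ (2 * s) * r ^ (3 * (2 * b)) * (C ^ 2 * r ^ (-(n : ℝ))) := by gcongr
    _ = C ^ 2 * r ^ (2 * s + 3 * (2 * b) + (-(n : ℝ))) := by
        rw [Real.rpow_add (by positivity), Real.rpow_add (by positivity)]; ring
    _ ≤ C ^ 2 * r ^ (-3 : ℝ) := by
        gcongr
        linarith

lemma airy_shear : MeasurePreserving (fun p : ℝ × ℝ => (p.1, p.2 + p.1 ^ 3)) := by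
  rw [Measure.volume_eq_prod]
  refine MeasurePreserving.skew_product (g := fun x y => y + x ^ 3) (MeasurePreserving.id _) (by fun_prop) ?_
  exact Filter.Eventually.of_forall fun x => (measurePreserving_add_right volume (x ^ 3)).map_eq

lemma airy_shear_emb : MeasurableEmbedding (fun p : ℝ × ℝ => (p.1, p.2 + p.1 ^ 3)) := by
  let e : (ℝ × ℝ) ≃ᵐ (ℝ × ℝ) :=
    { toFun := fun p => (p.1, p.2 + p.1 ^ 3)
      invFun := fun p => (p.1, p.2 - p.1 ^ 3)
      left_inv := fun p => by simp
      right_inv := fun p => by simp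
      measurable_toFun := by simp only [Equiv.coe_fn_mk]; fun_prop
      measurable_invFun := by simp only [Equiv.coe_fn_symm_mk]; fun_prop }
  exact e.measurableEmbedding

/-- The estimate along a measurable selection of times. -/
lemma airy_selected (s b : ℝ) (hs : 3 / 4 < s) (hb : 1 / 2 < b) :
    ∃ C : ℝ≥0∞, C ≠ ∞ ∧ ∀ t : ℝ → ℝ, Measurable t → (∀ x, |t x| ≤ 1) →
      ∀ U : SchwartzMap (ℝ × ℝ) ℂ,
      ∫⁻ x, ‖U (x, t x)‖ₑ ^ 2 ≤ C * ENNReal.ofReal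
        (∫ p : ℝ × ℝ, (1 + |p.1|) ^ (2 * s) * (1 + |p.2 - p.1 ^ 3|) ^ (2 * b) *
          ‖∫ q : ℝ × ℝ, Complex.exp (-Complex.I * (q.1 * p.1 + q.2 * p.2)) * U q‖ ^ 2) := by
  obtain ⟨C, hC, hcore⟩ := airy_core s b hs hb
  set c : ℂ := ((((2 * Real.pi) ^ 2)⁻¹ : ℝ) : ℂ) with hc
  refine ⟨C * ‖c‖ₑ ^ 2, ENNReal.mul_ne_top hC (by simp), ?_⟩
  intro t ht ht1 U
  obtain ⟨G, hG, hinv⟩ := airy_fourier U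
  simp only [hG]
  have hGm : Measurable G := G.continuous.measurable
  have h := hcore t ht ht1 (fun p => c * G (p.1, p.2 + p.1 ^ 3)) (by fun_prop) ?_
    (fun x => U (x, t x)) ?_ ?_ ?_
  · refine h.trans (le_of_eq ?_)
    rw [mul_assoc]
    congr 1
    rw [ofReal_integral_eq_lintegral_ofReal (airy_weight s b (by linarith) (by linarith) G)
      (Filter.Eventually.of_forall fun p => by positivity)]
    rw [← airy_shear.lintegral_comp_emb airy_shear_emb
        (fun p : ℝ × ℝ => ENNReal.ofReal ((1 + |p.1|) ^ (2 * s) *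
          (1 + |p.2 - p.1 ^ 3|) ^ (2 * b) * ‖G p‖ ^ 2)),
      ← lintegral_const_mul' _ _ (by simp)]
    refine lintegral_congr fun p => ?_
    simp only [add_sub_cancel_right]
    rw [ENNReal.ofReal_mul (q := ‖G _‖ ^ 2) (by positivity), ENNReal.ofReal_pow (norm_nonneg _),
      ofReal_norm, enorm_mul]
    ring
  · exact ((airy_shear.integrable_comp_emb airy_shear_emb).mpr G.integrable).const_mul c
  · exact U.continuous.measurable.comp (measurable_id.prodMk ht)
  · obtain ⟨K, hK⟩ := airy_decay U 2
    have hi := (integrable_one_add_norm (E := ℝ) (μ := volume) (r := 2) (by simp)).const_mul |K|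
    refine hi.mono' ?_ (Filter.Eventually.of_forall fun x => ?_)
    · exact (U.continuous.measurable.comp (measurable_id.prodMk ht)).aestronglyMeasurable
    · refine (hK _).trans ?_
      refine mul_le_mul (le_abs_self K) ?_ (by positivity) (by positivity)
      refine Real.rpow_le_rpow_of_nonpos (by positivity) ?_ (by norm_num)
      gcongr
      exact norm_fst_le (x, t x)
  · intro x
    rw [hinv x (t x), ← integral_const_mul, ← airy_shear.integral_comp airy_shear_emb]
    refine integral_congr_ae (Filter.Eventually.of_forall fun p => ?_)
    simp only [airyOsc, airyPh]
    rw [← Complex.exp_add]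
    have : (((x * p.1 + t x * (p.2 + p.1 ^ 3) : ℝ) : ℂ) * Complex.I) =
      ((x * p.1 + t x * p.1 ^ 3 : ℝ) : ℂ) * Complex.I + ((t x * p.2 : ℝ) : ℂ) * Complex.I := by
      push_cast; ring
    rw [this]; ring

/-- Running maximisers along a sequence of times. -/
noncomputable def airySel (U : ℝ × ℝ → ℂ) (a : ℕ → ℝ) : ℕ → ℝ → ℝ
  | 0 => fun _ => a 0
  | n + 1 => fun x => if ‖U (x, airySel U a n x)‖ ≤ ‖U (x, a (n + 1))‖ then a (n + 1)
      else airySel U a n x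

lemma airySel_meas (U : ℝ × ℝ → ℂ) (hU : Measurable U) (a : ℕ → ℝ) (n : ℕ) :
    Measurable (airySel U a n) := by
  induction n with
  | zero => exact measurable_const
  | succ n ih =>
    unfold airySel
    refine Measurable.ite (measurableSet_le ?_ ?_) measurable_const ih
    · exact (hU.comp (measurable_id.prodMk ih)).norm
    · exact (hU.comp (measurable_id.prodMk measurable_const)).norm

lemma airySel_mem (U : ℝ × ℝ → ℂ) (a : ℕ → ℝ) (S : Set ℝ) (ha : ∀ n, a n ∈ S) (n : ℕ) (x : ℝ) :
    airySel U a n x ∈ S := by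
  induction n with
  | zero => exact ha 0
  | succ n ih =>
    unfold airySel
    split_ifs
    · exact ha _
    · exact ih

lemma airySel_succ (U : ℝ × ℝ → ℂ) (a : ℕ → ℝ) (n : ℕ) (x : ℝ) :
    ‖U (x, airySel U a n x)‖ ≤ ‖U (x, airySel U a (n + 1) x)‖ ∧
    ‖U (x, a (n + 1))‖ ≤ ‖U (x, airySel U a (n + 1) x)‖ := by
  rw [airySel]
  beta_reduce
  split_ifs with h
  · exact ⟨h, le_rfl⟩
  · exact ⟨le_rfl, (not_le.mp h).le⟩

lemma airySel_le (U : ℝ × ℝ → ℂ) (a : ℕ → ℝ) (n : ℕ) (x : ℝ) :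
    ‖U (x, a n)‖ ≤ ‖U (x, airySel U a n x)‖ := by
  cases n with
  | zero => exact le_rfl
  | succ n => exact (airySel_succ U a n x).2

lemma airy_sup (U : SchwartzMap (ℝ × ℝ) ℂ) (T : ℝ) (hT : 0 < T) (hT1 : T ≤ 1) (B : ℝ≥0∞)
    (hB : ∀ t : ℝ → ℝ, Measurable t → (∀ x, |t x| ≤ 1) → ∫⁻ x, ‖U (x, t x)‖ₑ ^ 2 ≤ B) :
    ∫⁻ x : ℝ, ENNReal.ofReal ((⨆ t ∈ Set.Icc (-T) T, ‖U (x, t)‖) ^ 2) ≤ B := by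
  have : Nonempty (Set.Icc (-T) T) := ⟨⟨0, by constructor <;> linarith⟩⟩
  obtain ⟨d, hd⟩ := TopologicalSpace.exists_dense_seq (Set.Icc (-T) T)
  set a : ℕ → ℝ := fun n => (d n : ℝ) with ha
  have mU := U.continuous.measurable
  have hmono : Monotone fun (n : ℕ) (x : ℝ) => ‖U (x, airySel U a n x)‖ₑ ^ 2 := by
    refine monotone_nat_of_le_succ fun n x => ?_
    have := (airySel_succ U a n x).1
    have h2 : ‖U (x, airySel U a n x)‖ₑ ≤ ‖U (x, airySel U a (n + 1) x)‖ₑ := by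
      rw [← ofReal_norm, ← ofReal_norm]; exact ENNReal.ofReal_le_ofReal this
    exact pow_le_pow_left' h2 2
  have hmeas : ∀ n, Measurable fun x : ℝ => ‖U (x, airySel U a n x)‖ₑ ^ 2 := fun n =>
    (mU.comp (measurable_id.prodMk (airySel_meas U mU a n))).enorm.pow_const 2
  calc ∫⁻ x : ℝ, ENNReal.ofReal ((⨆ t ∈ Set.Icc (-T) T, ‖U (x, t)‖) ^ 2)
      ≤ ∫⁻ x : ℝ, ⨆ n : ℕ, ‖U (x, airySel U a n x)‖ₑ ^ 2 := by
        refine lintegral_mono fun x => ?_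
        beta_reduce
        set M : ℝ≥0∞ := ⨆ n : ℕ, ‖U (x, airySel U a n x)‖ₑ ^ 2 with hM
        have key : ∀ t ∈ Set.Icc (-T) T, ‖U (x, t)‖ₑ ^ 2 ≤ M := by
          intro t htm
          have hcl : IsClosed {z : Set.Icc (-T) T | ‖U (x, (z : ℝ))‖ₑ ^ 2 ≤ M} := by
            apply isClosed_le _ continuous_const
            have : Continuous fun z : Set.Icc (-T) T => U (x, (z : ℝ)) :=
              U.continuous.comp (by fun_prop)
            fun_prop
          have := hd.induction_on (p := fun z : Set.Icc (-T) T => ‖U (x, (z : ℝ))‖ₑ ^ 2 ≤ M)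
            ⟨t, htm⟩ hcl (fun n => ?_)
          · exact this
          · refine le_trans ?_ (le_iSup (fun n : ℕ => ‖U (x, airySel U a n x)‖ₑ ^ 2) n)
            have h2 : ‖U (x, a n)‖ₑ ≤ ‖U (x, airySel U a n x)‖ₑ := by
              rw [← ofReal_norm, ← ofReal_norm]; exact ENNReal.ofReal_le_ofReal (airySel_le U a n x)
            exact pow_le_pow_left' h2 2
        rcases eq_or_ne M ∞ with hMt | hMt
        · rw [hMt]; exact le_top
        · have hs : (⨆ t ∈ Set.Icc (-T) T, ‖U (x, t)‖) ≤ Real.sqrt M.toReal := by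
            refine Real.iSup_le (fun t => Real.iSup_le (fun htm => ?_) (Real.sqrt_nonneg _))
              (Real.sqrt_nonneg _)
            apply Real.le_sqrt_of_sq_le
            have := ENNReal.toReal_mono hMt (key t htm)
            simpa using this
          have hs0 : 0 ≤ (⨆ t ∈ Set.Icc (-T) T, ‖U (x, t)‖) :=
            Real.iSup_nonneg fun t => Real.iSup_nonneg fun _ => norm_nonneg _
          calc _ ≤ ENNReal.ofReal (Real.sqrt M.toReal ^ 2) := by gcongr
            _ = M := by rw [Real.sq_sqrt ENNReal.toReal_nonneg, ENNReal.ofReal_toReal hMt]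
    _ = ⨆ n : ℕ, ∫⁻ x : ℝ, ‖U (x, airySel U a n x)‖ₑ ^ 2 := lintegral_iSup hmeas hmono
    _ ≤ B := by
        refine iSup_le fun n => hB _ (airySel_meas U mU a n) fun x => ?_
        have := airySel_mem U a (Set.Icc (-T) T) (fun n => (d n).2) n x
        exact abs_le.mpr ⟨by linarith [this.1], by linarith [this.2]⟩

theorem L2x_LinftyT_est (s b : ℝ) (hs : 3 / 4 < s) (hb : 1 / 2 < b) :
    ∃ C > 0, ∀ T : ℝ, 0 < T → T ≤ 1 → ∀ U : SchwartzMap (ℝ × ℝ) ℂ,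
      (∫⁻ x : ℝ, ENNReal.ofReal
          ((⨆ t ∈ Set.Icc (-T) T, ‖U (x, t)‖) ^ 2)) ^ ((1 : ℝ) / 2) ≤
      ENNReal.ofReal (C *
        (∫ p : ℝ × ℝ, (1 + |p.1|) ^ (2 * s) * (1 + |p.2 - p.1 ^ 3|) ^ (2 * b) *
          ‖∫ q : ℝ × ℝ, Complex.exp (-Complex.I * (q.1 * p.1 + q.2 * p.2)) * U q‖ ^ 2) ^
        ((1 : ℝ) / 2)) := by
  obtain ⟨C, hC, hsel⟩ := airy_selected s b hs hb
  refine ⟨(C.toReal + 1) ^ ((1:ℝ) / 2), by positivity, ?_⟩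
  intro T hT hT1 U
  have h := airy_sup U T hT hT1 _ (fun t ht ht1 => hsel t ht ht1 U)
  set X := ∫ p : ℝ × ℝ, (1 + |p.1|) ^ (2 * s) * (1 + |p.2 - p.1 ^ 3|) ^ (2 * b) *
          ‖∫ q : ℝ × ℝ, Complex.exp (-Complex.I * (q.1 * p.1 + q.2 * p.2)) * U q‖ ^ 2 with hX
  have hX0 : 0 ≤ X := integral_nonneg fun p => by positivity
  rw [← Real.mul_rpow (by positivity) hX0, ← ENNReal.ofReal_rpow_of_nonneg (by positivity) (by norm_num)]
  refine ENNReal.rpow_le_rpow (h.trans ?_) (by norm_num)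
  rw [ENNReal.ofReal_mul (by positivity)]
  gcongr
  calc C = ENNReal.ofReal C.toReal := (ENNReal.ofReal_toReal hC).symm
    _ ≤ _ := ENNReal.ofReal_le_ofReal (by linarith)
end

section
/- Let b > 1/2. There exists a constant C > 0 such that for every T with 0 < T ≤ 1, every Schwartz function U : ℝ² → ℂ, and every x ∈ ℝ one has ( ∫_{−T}^{T} |(D_x U)(x,t)|² dt )^{1/2} ≤ C · ( ∫_{ℝ²} (1+|τ−ξ³|)^{2b} |Û(ξ,τ)|² dξ dτ )^{1/2}, where D_x is the Fourier multiplier in the x-variable with symbol |ξ|, i.e. (D_x U)(x,t) = (1/(2π)) ∫_ℝ |ξ| e^{ixξ} 𝓕_x U(ξ,t) dξ with 𝓕_x U(ξ,t) = ∫_ℝ e^{−ixξ}U(x,t) dx. -/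
open MeasureTheory ENNReal

section helpers
open FourierTransform

lemma aux_fourier_ae (f : ℝ → ℂ) (hf : Integrable f) (hf2 : MemLp f 2) :
    𝓕 f =ᵐ[volume] (𝓕 (hf2.toLp f) : Lp ℂ 2 (volume : Measure ℝ)) := by
  have hcont : Continuous (𝓕 f) :=
    VectorFourier.fourierIntegral_continuous Real.continuous_fourierChar
      (by exact continuous_inner) hf
  apply ae_eq_of_integral_contDiff_smul_eq
  · exact hcont.locallyIntegrable
  · exact (Lp.memLp _).locallyIntegrable (by norm_num)
  · intro g g_smooth g_cpt
    have hg₁ : HasCompactSupport (Complex.ofRealCLM ∘ g) := g_cpt.comp_left rfl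
    let φ : SchwartzMap ℝ ℂ := hg₁.toSchwartzMap (by fun_prop)
    have h1 := congrArg (fun T => T φ) (Lp.fourier_toTemperedDistribution_eq (hf2.toLp f))
    simp only [TemperedDistribution.fourier_apply, Lp.toTemperedDistribution_apply] at h1
    have h2 : ∫ x, (𝓕 φ) x • (hf2.toLp f) x = ∫ x, (𝓕 φ) x • f x := by
      apply integral_congr_ae
      filter_upwards [hf2.coeFn_toLp] with x hx
      rw [hx]
    have h3 : ∫ x, (𝓕 φ) x • f x = ∫ x, φ x • 𝓕 f x := by
      have := VectorFourier.integral_fourierIntegral_smul_eq_flip (μ := volume) (ν := volume)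
        (L := innerₗ ℝ)
        Real.continuous_fourierChar (by exact continuous_inner) (φ.integrable (μ := volume)) hf
      rw [flip_innerₗ] at this
      exact this
    have e : ∀ F : ℝ → ℂ, ∫ x, g x • F x = ∫ x, φ x • F x := by
      intro F; rfl
    rw [e, e, ← h1, h2, h3]

lemma aux_plancherel (f : ℝ → ℂ) (hf : Integrable f) (hf2 : MemLp f 2) :
    ∫⁻ t, ‖𝓕⁻ f t‖ₑ ^ 2 = ∫⁻ s, ‖f s‖ₑ ^ 2 := by
  have h0 : ∫⁻ t, ‖𝓕⁻ f t‖ₑ ^ 2 = ∫⁻ t, ‖𝓕 f t‖ₑ ^ 2 := by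
    simp_rw [Real.fourierInv_eq_fourier_neg]
    exact lintegral_neg_eq_self (fun t => ‖𝓕 f t‖ₑ ^ 2)
  have key : ∀ g : ℝ → ℂ, ∫⁻ t, ‖g t‖ₑ ^ 2 = eLpNorm g 2 volume ^ 2 := by
    intro g
    rw [eLpNorm_eq_lintegral_rpow_enorm_toReal (by norm_num) (by norm_num)]
    rw [← ENNReal.rpow_natCast, ← ENNReal.rpow_mul]
    simp
  rw [h0, key, key, eLpNorm_congr_ae (aux_fourier_ae f hf hf2),
    ← eLpNorm_congr_ae hf2.coeFn_toLp]
  congr 1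
  have := Lp.norm_fourier_eq (hf2.toLp f)
  rw [← Lp.enorm_def, ← Lp.enorm_def, ← ofReal_norm, ← ofReal_norm, this]

lemma aux_schwartz_fourier (U : SchwartzMap (ℝ × ℝ) ℂ) : ∃ W : SchwartzMap (ℝ × ℝ) ℂ,
    ∀ p : ℝ × ℝ, W p =
      ∫ q : ℝ × ℝ, Complex.exp (-Complex.I * (q.1 * p.1 + q.2 * p.2)) * U q := by
  let e := WithLp.prodContinuousLinearEquiv 2 ℝ ℝ ℝ
  let V : SchwartzMap (WithLp 2 (ℝ × ℝ)) ℂ := SchwartzMap.compCLMOfContinuousLinearEquiv ℂ e U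
  let s : (ℝ × ℝ) ≃L[ℝ] (ℝ × ℝ) := ContinuousLinearEquiv.smulLeft
    (Units.mk0 ((2 * Real.pi)⁻¹ : ℝ) (by positivity))
  refine ⟨SchwartzMap.compCLMOfContinuousLinearEquiv ℂ (s.trans e.symm) (𝓕 V), fun p => ?_⟩
  rw [SchwartzMap.compCLMOfContinuousLinearEquiv_apply, Function.comp, SchwartzMap.fourier_coe,
    Real.fourier_eq', ← (WithLp.volume_preserving_ofLp ℝ ℝ).integral_comp
      (MeasurableEquiv.toLp 2 (ℝ × ℝ)).symm.measurableEmbedding]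
  congr 1
  ext v
  rw [smul_eq_mul]
  refine congrArg₂ (· * ·) (congrArg Complex.exp ?_) rfl
  have hp : (Real.pi : ℂ) ≠ 0 := by exact_mod_cast Real.pi_ne_zero
  have : (inner ℝ v ((s.trans e.symm) p) : ℝ) =
    (2 * Real.pi)⁻¹ * (v.ofLp.1 * p.1 + v.ofLp.2 * p.2) := by
    have hs : (s.trans e.symm) p = WithLp.toLp 2 ((2 * Real.pi)⁻¹ • p) := rfl
    rw [hs, WithLp.prod_inner_apply]
    simp only [Prod.smul_fst, Prod.smul_snd, smul_eq_mul, real_inner_eq_re_inner]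
    simp only [RCLike.inner_apply, conj_trivial, RCLike.re_to_real]
    ring
  rw [this]
  push_cast
  field_simp

lemma aux_decay (U : SchwartzMap (ℝ × ℝ) ℂ) (k : ℕ) : ∃ C : ℝ, 0 ≤ C ∧ ∀ p : ℝ × ℝ,
    (1 + ‖p‖) ^ k * ‖U p‖ ≤ C := by
  have h := fun p => SchwartzMap.one_add_le_sup_seminorm_apply (𝕜 := ℝ) (m := (k, 0)) le_rfl le_rfl U p
  simp only [norm_iteratedFDeriv_zero] at h
  exact ⟨_, le_trans (by positivity) (h 0), h⟩

lemma aux_kernel (b : ℝ) (hb : 1 / 2 < b) : ∃ K : ℝ, 0 ≤ K ∧ ∀ τ : ℝ,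
    ∫⁻ ξ : ℝ, ENNReal.ofReal (ξ ^ 2 * (1 + |τ - ξ ^ 3|) ^ (-(2 * b))) ≤ ENNReal.ofReal K := by
  have hint : Integrable (fun x : ℝ => (1 + ‖x‖) ^ (-(2 * b))) :=
    integrable_one_add_norm (by simp; linarith)
  refine ⟨∫ x : ℝ, (1 + ‖x‖) ^ (-(2 * b)), integral_nonneg fun x => by positivity, fun τ => ?_⟩
  rw [ofReal_integral_eq_lintegral_ofReal hint (.of_forall fun x => by positivity)]
  have hcv := lintegral_image_eq_lintegral_abs_deriv_mul (s := Set.univ) (f := fun x : ℝ => x ^ 3)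
    (f' := fun x => 3 * x ^ 2) MeasurableSet.univ
    (fun x _ => by simpa using hasDerivAt_pow 3 x)
    ((Odd.strictMono_pow (by decide)).injective.injOn)
    (fun u => ENNReal.ofReal ((1 + ‖τ - u‖) ^ (-(2 * b))))
  calc _ ≤ ∫⁻ x in Set.univ, ENNReal.ofReal |3 * x ^ 2| *
          ENNReal.ofReal ((1 + ‖τ - x ^ 3‖) ^ (-(2 * b))) := by
        rw [setLIntegral_univ]
        apply lintegral_mono
        intro x
        simp only []
        rw [← ENNReal.ofReal_mul (abs_nonneg _), Real.norm_eq_abs]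
        apply ENNReal.ofReal_le_ofReal
        gcongr
        rw [abs_of_nonneg (by positivity)]
        nlinarith [sq_nonneg x]
    _ ≤ _ := by
        rw [← hcv]
        refine (setLIntegral_le_lintegral _ _).trans ?_
        rw [lintegral_sub_left_eq_self (fun u => ENNReal.ofReal ((1 + ‖u‖) ^ (-(2 * b)))) τ]

lemma aux_integrable (b : ℝ) (W : SchwartzMap (ℝ × ℝ) ℂ) :
    Integrable (fun p : ℝ × ℝ => (1 + |p.2 - p.1 ^ 3|) ^ (2 * b) * ‖W p‖ ^ 2) := by
  obtain ⟨C, hC, h⟩ := aux_decay W (3 * ⌈|2 * b|⌉₊)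
  refine Integrable.mono' ((W.integrable (μ := volume)).norm.const_mul C) ?_ (.of_forall fun p => ?_)
  · refine Continuous.aestronglyMeasurable ?_
    have : ∀ p : ℝ × ℝ, 1 + |p.2 - p.1 ^ 3| ≠ 0 ∨ 0 < 2 * b := fun p => .inl (by positivity)
    have h1 : Continuous (fun p : ℝ × ℝ => (1 + |p.2 - p.1 ^ 3|) ^ (2 * b)) :=
      Continuous.rpow_const (by fun_prop) (fun p => .inl (by positivity))
    exact h1.mul (W.continuous.norm.pow 2)
  · rw [Real.norm_of_nonneg (by positivity), pow_two, ← mul_assoc]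
    gcongr
    refine le_trans ?_ (h p)
    gcongr
    have h1 : |p.1| ≤ ‖p‖ := norm_fst_le p
    have h2 : |p.2| ≤ ‖p‖ := norm_snd_le p
    have h3 : 1 + |p.2 - p.1 ^ 3| ≤ (1 + ‖p‖) ^ 3 := by
      have : |p.2 - p.1 ^ 3| ≤ |p.2| + |p.1| ^ 3 := by
        rw [← abs_pow]; exact abs_sub _ _
      have : |p.1| ^ 3 ≤ ‖p‖ ^ 3 := by gcongr
      nlinarith [norm_nonneg p, sq_nonneg ‖p‖]
    calc (1 + |p.2 - p.1 ^ 3|) ^ (2 * b) ≤ (1 + |p.2 - p.1 ^ 3|) ^ ((⌈|2 * b|⌉₊ : ℕ) : ℝ) := by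
          apply Real.rpow_le_rpow_of_exponent_le
          · linarith [abs_nonneg (p.2 - p.1 ^ 3)]
          · exact (le_abs_self _).trans (Nat.le_ceil _)
      _ ≤ _ := by
          rw [Real.rpow_natCast, pow_mul]
          gcongr

end helpers
section helpers2
open FourierTransform

lemma aux_slice_bound (U : SchwartzMap (ℝ × ℝ) ℂ) : ∃ C : ℝ, 0 ≤ C ∧ (∀ y t : ℝ,
    ‖U (y, t)‖ ≤ C * (1 + ‖y‖) ^ (-(2 : ℝ))) ∧ ∀ y t : ℝ,
    ‖U (y, t)‖ ≤ C * (1 + ‖t‖) ^ (-(2 : ℝ)) := by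
  obtain ⟨C, hC, h⟩ := aux_decay U 2
  have key : ∀ (p : ℝ × ℝ) (r : ℝ), 0 ≤ r → r ≤ ‖p‖ → ‖U p‖ ≤ C * (1 + r) ^ (-(2 : ℝ)) := by
    intro p r hr hrp
    rw [Real.rpow_neg (by positivity), ← div_eq_mul_inv, le_div_iff₀ (by positivity)]
    refine le_trans ?_ (h p)
    rw [mul_comm]
    norm_cast
    gcongr
  exact ⟨C, hC, fun y t => key _ _ (norm_nonneg _) (norm_fst_le (y, t)),
    fun y t => key _ _ (norm_nonneg _) (norm_snd_le (y, t))⟩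

lemma aux_norm_exp (r : ℝ) (z : ℂ) (hz : z = r * Complex.I) : ‖Complex.exp z‖ = 1 := by
  rw [hz, Complex.norm_exp_ofReal_mul_I]

lemma aux_inversion (U W : SchwartzMap (ℝ × ℝ) ℂ)
    (hW : ∀ p : ℝ × ℝ, W p =
      ∫ q : ℝ × ℝ, Complex.exp (-Complex.I * (q.1 * p.1 + q.2 * p.2)) * U q) (ξ t : ℝ) :
    ∫ y : ℝ, Complex.exp (-Complex.I * y * ξ) * U (y, t) =
      𝓕⁻ (fun s : ℝ => W (ξ, 2 * Real.pi * s)) t := by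
  set G : ℝ → ℂ := fun t => ∫ y : ℝ, Complex.exp (-Complex.I * y * ξ) * U (y, t) with hG
  have hdec : Integrable (fun y : ℝ => (1 + ‖y‖) ^ (-(2 : ℝ))) :=
    integrable_one_add_norm (by simp)
  have hn : ∀ y : ℝ, ‖Complex.exp (-Complex.I * y * ξ)‖ = 1 := fun y =>
    aux_norm_exp (-(y * ξ)) _ (by push_cast; ring)
  have hGc : Continuous G := by
    obtain ⟨C, hC, h, -⟩ := aux_slice_bound U
    refine continuous_of_dominated (bound := fun y => C * (1 + ‖y‖) ^ (-(2 : ℝ))) ?_ ?_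
      (hdec.const_mul C) ?_
    · intro t
      exact Continuous.aestronglyMeasurable (by fun_prop)
    · intro t
      refine .of_forall fun y => ?_
      rw [norm_mul, hn, one_mul]
      exact h y t
    · exact .of_forall fun y => by fun_prop
  have hprod : Integrable (fun q : ℝ × ℝ => Complex.exp (-Complex.I * q.1 * ξ) * U q)
      (volume.prod volume) := by
    refine (U.integrable (μ := volume)).bdd_mul (c := 1) ?_ ?_
    · exact Continuous.aestronglyMeasurable (by fun_prop)
    · exact .of_forall fun q => (hn q.1).le
  have hGi : Integrable G := hprod.integral_prod_right
  have hFG : 𝓕 G = fun s : ℝ => W (ξ, 2 * Real.pi * s) := by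
    ext s
    have hn2 : ∀ t : ℝ, ‖Complex.exp (↑(-2 * Real.pi * t * s) * Complex.I)‖ = 1 := fun y =>
      aux_norm_exp _ _ rfl
    have hprod2 : Integrable (fun q : ℝ × ℝ => Complex.exp (↑(-2 * Real.pi * q.2 * s) * Complex.I) *
        (Complex.exp (-Complex.I * q.1 * ξ) * U q)) (volume.prod volume) := by
      refine hprod.bdd_mul (c := 1) ?_ ?_
      · exact Continuous.aestronglyMeasurable (by fun_prop)
      · exact .of_forall fun q => (hn2 q.2).le
    rw [Real.fourier_real_eq_integral_exp_smul, hW]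
    simp only [smul_eq_mul, hG]
    simp_rw [← integral_const_mul]
    rw [← integral_prod_symm _ hprod2]
    congr 1
    ext q
    rw [← mul_assoc, ← Complex.exp_add]
    congr 2
    push_cast
    ring
  have hWi : Integrable (fun s : ℝ => W (ξ, 2 * Real.pi * s)) := by
    obtain ⟨C, hC, -, h⟩ := aux_slice_bound W
    have : Integrable (fun s : ℝ => W (ξ, s)) := by
      refine Integrable.mono' (hdec.const_mul C) ?_ (.of_forall fun s => h ξ s)
      exact Continuous.aestronglyMeasurable (by fun_prop)
    exact this.comp_mul_left' (by positivity)
  rw [← hFG, hGc.fourierInv_fourier_eq hGi (hFG ▸ hWi)]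

lemma aux_scaled_integrable (W : SchwartzMap (ℝ × ℝ) ℂ) :
    Integrable (fun p : ℝ × ℝ => ((|p.1| : ℝ) : ℂ) * W (p.1, 2 * Real.pi * p.2))
      (volume.prod volume) := by
  let u : ℝ ≃L[ℝ] ℝ := ContinuousLinearEquiv.smulLeft
    (Units.mk0 (2 * Real.pi : ℝ) (by positivity))
  let e : (ℝ × ℝ) ≃L[ℝ] (ℝ × ℝ) := (ContinuousLinearEquiv.refl ℝ ℝ).prodCongr u
  let W2 : SchwartzMap (ℝ × ℝ) ℂ := SchwartzMap.compCLMOfContinuousLinearEquiv ℂ e W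
  have h2 : ∀ p : ℝ × ℝ, W2 p = W (p.1, 2 * Real.pi * p.2) := fun p => rfl
  simp_rw [← h2]
  refine Integrable.mono' (W2.integrable_pow_mul volume 1) ?_ (.of_forall fun p => ?_)
  · exact Continuous.aestronglyMeasurable (by fun_prop)
  · rw [norm_mul, Complex.norm_real, norm_abs_eq_norm, pow_one]
    gcongr
    exact norm_fst_le p

lemma aux_fubini (W : SchwartzMap (ℝ × ℝ) ℂ) (x t : ℝ) :
    (1 / (2 * Real.pi) : ℂ) * ∫ ξ : ℝ, ((|ξ| : ℝ) : ℂ) * Complex.exp (Complex.I * x * ξ) *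
        𝓕⁻ (fun s : ℝ => W (ξ, 2 * Real.pi * s)) t =
      𝓕⁻ (fun s : ℝ => (1 / (2 * Real.pi) : ℂ) * ∫ ξ : ℝ, ((|ξ| : ℝ) : ℂ) *
        Complex.exp (Complex.I * x * ξ) * W (ξ, 2 * Real.pi * s)) t := by
  simp only [Real.fourierInv_eq', smul_eq_mul]
  have hint : Integrable (Function.uncurry fun ξ s : ℝ =>
      ((|ξ| : ℝ) : ℂ) * Complex.exp (Complex.I * x * ξ) *
      (Complex.exp (↑(2 * Real.pi * inner ℝ s t) * Complex.I) * W (ξ, 2 * Real.pi * s)))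
      (volume.prod volume) := by
    have := (aux_scaled_integrable W).bdd_mul (c := 1)
      (f := fun p : ℝ × ℝ => Complex.exp (Complex.I * x * p.1) *
        Complex.exp (↑(2 * Real.pi * inner ℝ p.2 t) * Complex.I))
      (Continuous.aestronglyMeasurable (by fun_prop))
      (.of_forall fun p => by
        rw [norm_mul, aux_norm_exp (x * p.1) _ (by push_cast; ring), aux_norm_exp _ _ rfl, one_mul])
    refine this.congr (.of_forall fun p => ?_)
    simp only [Function.uncurry]
    ring
  simp_rw [← integral_const_mul]
  rw [integral_integral_swap]
  swap
  · exact hint.const_mul (1 / (2 * Real.pi) : ℂ)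
  congr 1
  ext s
  congr 1
  ext ξ
  ring

lemma aux_cs (b K : ℝ) (hK : ∀ τ : ℝ,
    ∫⁻ ξ : ℝ, ENNReal.ofReal (ξ ^ 2 * (1 + |τ - ξ ^ 3|) ^ (-(2 * b))) ≤ ENNReal.ofReal K)
    (W : SchwartzMap (ℝ × ℝ) ℂ) (x τ : ℝ) :
    ‖(1 / (2 * Real.pi) : ℂ) * ∫ ξ : ℝ, ((|ξ| : ℝ) : ℂ) *
        Complex.exp (Complex.I * x * ξ) * W (ξ, τ)‖ₑ ^ 2 ≤
      ENNReal.ofReal K * ∫⁻ ξ : ℝ, ENNReal.ofReal ((1 + |τ - ξ ^ 3|) ^ (2 * b) * ‖W (ξ, τ)‖ ^ 2) := by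
  have hpi : ‖(1 / (2 * Real.pi) : ℂ)‖ₑ ≤ 1 := by
    rw [← ofReal_norm, ENNReal.ofReal_le_one]
    simp only [norm_div, norm_mul, Complex.norm_real, norm_one, Complex.norm_ofNat]
    rw [Real.norm_of_nonneg Real.pi_pos.le, div_le_one (by positivity)]
    linarith [Real.pi_gt_three]
  have hpos : ∀ ξ : ℝ, 0 < 1 + |τ - ξ ^ 3| := fun ξ => by positivity
  have hc : ∀ c : ℝ, Continuous (fun ξ : ℝ => (1 + |τ - ξ ^ 3|) ^ c) := fun c =>
      Continuous.rpow_const (by fun_prop) (fun p => .inl (hpos p).ne')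
  set f : ℝ → ℝ≥0∞ := fun ξ => ENNReal.ofReal (|ξ| * (1 + |τ - ξ ^ 3|) ^ (-b)) with hf
  set g : ℝ → ℝ≥0∞ := fun ξ => ENNReal.ofReal ((1 + |τ - ξ ^ 3|) ^ b * ‖W (ξ, τ)‖) with hg
  have hfm : AEMeasurable f := by
    have := hc (-b)
    exact (ENNReal.continuous_ofReal.comp (by fun_prop)).measurable.aemeasurable
  have hgm : AEMeasurable g := by
    have := hc b
    exact (ENNReal.continuous_ofReal.comp (by fun_prop)).measurable.aemeasurable
  have hcs := ENNReal.lintegral_mul_le_Lp_mul_Lq volume Real.HolderConjugate.two_two hfm hgm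
  have hf2 : ∫⁻ ξ, f ξ ^ (2 : ℝ) ≤ ENNReal.ofReal K := by
    refine le_trans (le_of_eq ?_) (hK τ)
    congr 1
    ext ξ
    rw [hf]
    simp only [ENNReal.rpow_ofNat]
    rw [← ENNReal.ofReal_pow (by positivity), mul_pow, sq_abs, ← Real.rpow_natCast,
      ← Real.rpow_natCast, ← Real.rpow_mul (hpos ξ).le]
    congr 3
    push_cast; ring
  have hg2 : ∫⁻ ξ, g ξ ^ (2 : ℝ) =
      ∫⁻ ξ : ℝ, ENNReal.ofReal ((1 + |τ - ξ ^ 3|) ^ (2 * b) * ‖W (ξ, τ)‖ ^ 2) := by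
    congr 1
    ext ξ
    rw [hg]
    simp only [ENNReal.rpow_ofNat]
    rw [← ENNReal.ofReal_pow (by positivity), mul_pow, ← Real.rpow_natCast _ 2,
      ← Real.rpow_mul (hpos ξ).le]
    congr 3
    push_cast; ring
  have h1 : ‖(1 / (2 * Real.pi) : ℂ) * ∫ ξ : ℝ, ((|ξ| : ℝ) : ℂ) *
        Complex.exp (Complex.I * x * ξ) * W (ξ, τ)‖ₑ ≤ ∫⁻ ξ, (f * g) ξ := by
    rw [enorm_mul]
    refine (mul_le_of_le_one_left' hpi).trans ?_
    refine (enorm_integral_le_lintegral_enorm _).trans (le_of_eq ?_)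
    congr 1
    ext ξ
    rw [Pi.mul_apply, hf, hg]
    simp only []
    rw [← ENNReal.ofReal_mul (by positivity), ← ofReal_norm, norm_mul, norm_mul,
      aux_norm_exp (x * ξ) _ (by push_cast; ring), Complex.norm_real, norm_abs_eq_norm,
      Real.rpow_neg (hpos ξ).le, Real.norm_eq_abs]
    congr 1
    have : (1 + |τ - ξ ^ 3|) ^ b ≠ 0 := (Real.rpow_pos_of_pos (hpos ξ) b).ne'
    field_simp
  calc _ ≤ (ENNReal.ofReal K ^ (1 / 2 : ℝ) * (∫⁻ ξ, g ξ ^ (2 : ℝ)) ^ (1 / 2 : ℝ)) ^ 2 := by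
        gcongr
        exact h1.trans (hcs.trans (by gcongr))
    _ = _ := by
        rw [mul_pow, ← ENNReal.rpow_natCast, ← ENNReal.rpow_natCast, ← ENNReal.rpow_mul,
          ← ENNReal.rpow_mul, hg2]
        norm_num

lemma aux_scale (Φ : ℝ → ℝ≥0∞) (hΦ : Measurable Φ) :
    ∫⁻ s, Φ (2 * Real.pi * s) ≤ ∫⁻ s, Φ s := by
  have hp : (2 * Real.pi) ≠ 0 := by positivity
  rw [← lintegral_map (μ := volume) hΦ (measurable_const_mul (2 * Real.pi)),
    Real.map_volume_mul_left hp, lintegral_smul_measure, smul_eq_mul]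
  refine mul_le_of_le_one_left' ?_
  rw [ENNReal.ofReal_le_one, abs_of_pos (by positivity)]
  apply inv_le_one_of_one_le₀
  linarith [Real.pi_gt_three]

end helpers2

theorem LinftyX_L2T_est (b : ℝ) (hb : 1 / 2 < b) :
    ∃ C > 0, ∀ T : ℝ, 0 < T → T ≤ 1 → ∀ U : SchwartzMap (ℝ × ℝ) ℂ, ∀ x : ℝ,
      (∫⁻ t in Set.Icc (-T) T,
          (‖(1 / (2 * Real.pi) : ℂ) *
              ∫ ξ : ℝ, ((|ξ| : ℝ) : ℂ) * Complex.exp (Complex.I * x * ξ) *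
                ∫ y : ℝ, Complex.exp (-Complex.I * y * ξ) * U (y, t)‖₊ : ℝ≥0∞) ^ 2) ^
        ((1 : ℝ) / 2) ≤
      ENNReal.ofReal (C *
        (∫ p : ℝ × ℝ, (1 + |p.2 - p.1 ^ 3|) ^ (2 * b) *
          ‖∫ q : ℝ × ℝ, Complex.exp (-Complex.I * (q.1 * p.1 + q.2 * p.2)) * U q‖ ^ 2) ^
        ((1 : ℝ) / 2)) := by
  obtain ⟨K, hK0, hK⟩ := aux_kernel b hb
  refine ⟨(K + 1) ^ ((1 : ℝ) / 2), by positivity, fun T _ _ U x => ?_⟩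
  obtain ⟨W, hW⟩ := aux_schwartz_fourier U
  simp_rw [← hW, aux_inversion U W hW, aux_fubini W x]
  set A : ℝ := ∫ p : ℝ × ℝ, (1 + |p.2 - p.1 ^ 3|) ^ (2 * b) * ‖W p‖ ^ 2 with hA
  have hAi := aux_integrable b W
  have hA0 : 0 ≤ A := integral_nonneg fun p => by positivity
  set H : ℝ → ℂ := fun s : ℝ => (1 / (2 * Real.pi) : ℂ) * ∫ ξ : ℝ, ((|ξ| : ℝ) : ℂ) *
        Complex.exp (Complex.I * x * ξ) * W (ξ, 2 * Real.pi * s) with hH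
  have hHi : Integrable H := by
    have h := (aux_scaled_integrable W).bdd_mul (c := 1)
      (f := fun p : ℝ × ℝ => Complex.exp (Complex.I * x * p.1))
      (Continuous.aestronglyMeasurable (by fun_prop))
      (.of_forall fun p => by rw [aux_norm_exp (x * p.1) _ (by push_cast; ring)])
    refine (h.integral_prod_right.const_mul (1 / (2 * Real.pi) : ℂ)).congr (.of_forall fun s => ?_)
    simp only [hH]
    congr 2
    ext ξ
    ring
  have hm : Measurable (fun p : ℝ × ℝ =>
      ENNReal.ofReal ((1 + |p.2 - p.1 ^ 3|) ^ (2 * b) * ‖W p‖ ^ 2)) := by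
    have h1 : Continuous (fun p : ℝ × ℝ => (1 + |p.2 - p.1 ^ 3|) ^ (2 * b)) :=
      Continuous.rpow_const (by fun_prop) (fun p => .inl (by positivity))
    exact (ENNReal.continuous_ofReal.comp (by fun_prop)).measurable
  have hH2 : ∫⁻ s, ‖H s‖ₑ ^ 2 ≤ ENNReal.ofReal (K * A) := by
    calc ∫⁻ s, ‖H s‖ₑ ^ 2 ≤ ∫⁻ s, ENNReal.ofReal K * ∫⁻ ξ : ℝ, ENNReal.ofReal
          ((1 + |2 * Real.pi * s - ξ ^ 3|) ^ (2 * b) * ‖W (ξ, 2 * Real.pi * s)‖ ^ 2) :=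
          lintegral_mono fun s => aux_cs b K hK W x (2 * Real.pi * s)
      _ ≤ ∫⁻ s, ENNReal.ofReal K * ∫⁻ ξ : ℝ, ENNReal.ofReal
          ((1 + |s - ξ ^ 3|) ^ (2 * b) * ‖W (ξ, s)‖ ^ 2) :=
          aux_scale (fun s => ENNReal.ofReal K * ∫⁻ ξ : ℝ, ENNReal.ofReal
            ((1 + |s - ξ ^ 3|) ^ (2 * b) * ‖W (ξ, s)‖ ^ 2))
            (hm.lintegral_prod_left'.const_mul _)
      _ = _ := by
          rw [lintegral_const_mul _ hm.lintegral_prod_left', ENNReal.ofReal_mul hK0, hA,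
            ofReal_integral_eq_lintegral_ofReal hAi (.of_forall fun p => by positivity),
            Measure.volume_eq_prod, lintegral_prod_symm _ hm.aemeasurable]
  have hHmem : MemLp H 2 := by
    refine ⟨hHi.aestronglyMeasurable, ?_⟩
    rw [eLpNorm_lt_top_iff_lintegral_rpow_enorm_lt_top (by norm_num) (by norm_num)]
    simpa using hH2.trans_lt ENNReal.ofReal_lt_top
  have hfin : ∫⁻ t in Set.Icc (-T) T, (‖FourierTransformInv.fourierInv H t‖₊ : ℝ≥0∞) ^ 2 ≤
      ENNReal.ofReal (K * A) :=
    (setLIntegral_le_lintegral _ _).trans ((aux_plancherel H hHi hHmem).le.trans hH2)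
  calc _ ≤ ENNReal.ofReal (K * A) ^ ((1 : ℝ) / 2) := by gcongr
    _ ≤ ENNReal.ofReal ((K + 1) * A) ^ ((1 : ℝ) / 2) := by
        gcongr
        linarith
    _ = _ := by
        rw [ENNReal.ofReal_rpow_of_nonneg (by positivity) (by norm_num),
          Real.mul_rpow (by positivity) hA0]
end

section
/- Let σ > 0 and b > 1/2. There exists a constant C > 0, independent of σ, such that for every Schwartz function u : ℝ² → ℂ, with G : ℝ² → ℂ defined by G(ξ,τ) = ξ · ∫_{ℝ⁴} [1 − cosh(σ|ξ|)·sech(σ|ξ₁|)·sech(σ|ξ₂|)·sech(σ|ξ−ξ₁−ξ₂|)] · û(ξ₁,τ₁)·û(ξ₂,τ₂)·û(ξ−ξ₁−ξ₂, τ−τ₁−τ₂) dξ₁ dξ₂ dτ₁ dτ₂, the convolution û ∗ G on ℝ² satisfies ‖û ∗ G‖_{L²(ℝ²)} ≤ C σ² · ( ∫_{ℝ²} (1+|ξ|)^{4} (1+|τ−ξ³|)^{2b} |û(ξ,τ)|² dξ dτ )². -/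
open MeasureTheory ENNReal

lemma cm_mult (a b c : ℝ) : 1 - Real.cosh (a+b+c) * (Real.cosh a)⁻¹ * (Real.cosh b)⁻¹ * (Real.cosh c)⁻¹
    = -(Real.tanh a * Real.tanh b + Real.tanh b * Real.tanh c + Real.tanh a * Real.tanh c) := by
  have ha := (Real.cosh_pos a).ne'
  have hb := (Real.cosh_pos b).ne'
  have hc := (Real.cosh_pos c).ne'
  rw [Real.tanh_eq_sinh_div_cosh, Real.tanh_eq_sinh_div_cosh, Real.tanh_eq_sinh_div_cosh,
    Real.cosh_add, Real.cosh_add, Real.sinh_add]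
  field_simp
  ring

lemma cm_tanh_nonneg {x : ℝ} (hx : 0 ≤ x) : |Real.tanh x| ≤ x := by
  have hc := Real.cosh_pos x
  have hs := Real.sinh_nonneg_iff.2 hx
  rw [Real.tanh_eq_sinh_div_cosh, abs_of_nonneg (by positivity), div_le_iff₀ hc]
  have key : MonotoneOn (fun x : ℝ => x * Real.cosh x - Real.sinh x) (Set.Ici 0) := by
    apply monotoneOn_of_deriv_nonneg (convex_Ici 0)
    · fun_prop
    · fun_prop
    · intro y hy
      simp only [interior_Ici, Set.mem_Ioi] at hy
      have : HasDerivAt (fun x : ℝ => x * Real.cosh x - Real.sinh x)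
          (1 * Real.cosh y + y * Real.sinh y - Real.cosh y) y :=
        ((hasDerivAt_id y).mul (Real.hasDerivAt_cosh y)).sub (Real.hasDerivAt_sinh y)
      rw [this.deriv]
      have := Real.sinh_nonneg_iff.2 hy.le
      nlinarith [mul_nonneg hy.le this]
  have := key (Set.mem_Ici.2 le_rfl) (Set.mem_Ici.2 hx) hx
  simp at this
  linarith

lemma cm_tanh (x : ℝ) : |Real.tanh x| ≤ |x| := by
  rcases le_total 0 x with h | h
  · rw [abs_of_nonneg h]; exact cm_tanh_nonneg h
  · have := cm_tanh_nonneg (x := -x) (by linarith)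
    rw [Real.tanh_neg, abs_neg] at this
    rwa [abs_of_nonpos h]

lemma cm_mult_bound (σ x a b : ℝ) (hσ : 0 < σ) :
    |x| * |1 - Real.cosh (σ * |x|) * (Real.cosh (σ * |a|))⁻¹ *
              (Real.cosh (σ * |b|))⁻¹ * (Real.cosh (σ * |x - a - b|))⁻¹|
    ≤ 3 * σ^2 * ((1+|a|)*(1+|b|)*(1+|x-a-b|)*((1+|a|)+(1+|b|)+(1+|x-a-b|))) := by
  have hc : ∀ y : ℝ, Real.cosh (σ * |y|) = Real.cosh (σ * y) := by
    intro y
    rw [← Real.cosh_abs (σ * y), abs_mul, abs_of_pos hσ]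
  simp only [hc]
  obtain ⟨c, rfl⟩ : ∃ c, x = a + b + c := ⟨x - a - b, by ring⟩
  have e : a + b + c - a - b = c := by ring
  rw [e, show σ * (a+b+c) = σ*a+σ*b+σ*c by ring, cm_mult, abs_neg]
  have ta := cm_tanh (σ*a)
  have tb := cm_tanh (σ*b)
  have tc := cm_tanh (σ*c)
  rw [abs_mul, abs_of_pos hσ] at ta tb tc
  have h1 : |Real.tanh (σ*a) * Real.tanh (σ*b) + Real.tanh (σ*b) * Real.tanh (σ*c)
      + Real.tanh (σ*a) * Real.tanh (σ*c)| ≤ σ^2 * (|a| * |b| + |b| * |c| + |a| * |c|) := by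
    refine (abs_add_three _ _ _).trans ?_
    simp only [abs_mul]
    calc _ ≤ (σ * |a|) * (σ * |b|) + (σ * |b|) * (σ * |c|) + (σ * |a|) * (σ * |c|) := by gcongr
      _ = _ := by ring
  have h2 := abs_add_three a b c
  have pa := abs_nonneg a
  have pb := abs_nonneg b
  have pc := abs_nonneg c
  calc _ ≤ (|a|+|b|+|c|) * (σ^2 * (|a| * |b| + |b| * |c| + |a| * |c|)) := by gcongr
    _ = σ^2 * ((|a| * |b| + |b| * |c| + |a| * |c|) * (|a|+|b|+|c|)) := by ring
    _ ≤ σ^2 * ((3*((1+|a|)*(1+|b|)*(1+|c|))) * ((1+|a|)+(1+|b|)+(1+|c|))) := by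
      gcongr
      · nlinarith [mul_nonneg pa pb, mul_nonneg pa pc, mul_nonneg pb pc, mul_nonneg (mul_nonneg pa pb) pc]
      all_goals linarith
    _ = _ := by ring

lemma cm_cs {α : Type*} [MeasurableSpace α] (μ : Measure α) {f g : α → ℝ≥0∞}
    (hf : Measurable f) (hg : Measurable g) :
    (∫⁻ a, f a * g a ∂μ)^2 ≤ (∫⁻ a, f a ^ 2 ∂μ) * ∫⁻ a, g a ^ 2 ∂μ := by
  have := ENNReal.lintegral_mul_le_Lp_mul_Lq μ Real.HolderConjugate.two_two hf.aemeasurable hg.aemeasurable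
  calc _ ≤ _ := pow_le_pow_left' this 2
    _ = _ := by
      rw [mul_pow, ← ENNReal.rpow_natCast, ← ENNReal.rpow_natCast, ← ENNReal.rpow_mul, ← ENNReal.rpow_mul]
      norm_num

lemma cm_cs' {α : Type*} [MeasurableSpace α] (μ : Measure α) {f g : α → ℝ≥0∞}
    (hf : Measurable f) (hg : Measurable g) :
    (∫⁻ a, f a * g a ∂μ)^2 ≤ (∫⁻ a, f a ∂μ) * ∫⁻ a, f a * g a ^ 2 ∂μ := by
  have e : ∀ x : ℝ≥0∞, x ^ (1/2:ℝ) * x ^ (1/2:ℝ) = x := by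
    intro x
    rw [← ENNReal.rpow_add_of_nonneg _ _ (by norm_num) (by norm_num)]; norm_num
  have := cm_cs μ (f := fun a => f a ^ (1/2:ℝ)) (g := fun a => f a ^ (1/2:ℝ) * g a)
    (by fun_prop) (by fun_prop)
  have e2 : ∀ x : ℝ≥0∞, (x ^ (1/2:ℝ)) ^ 2 = x := fun x => by rw [sq, e]
  simpa only [← mul_assoc, e, e2, mul_pow] using this

noncomputable def cmConv (f g : ℝ × ℝ → ℝ≥0∞) (p : ℝ × ℝ) : ℝ≥0∞ := ∫⁻ q, f q * g (p - q)

lemma cmConv_meas {f g : ℝ × ℝ → ℝ≥0∞} (hf : Measurable f) (hg : Measurable g) :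
    Measurable (cmConv f g) := by
  unfold cmConv
  apply Measurable.lintegral_prod_right' (f := fun z : (ℝ×ℝ)×(ℝ×ℝ) => f z.2 * g (z.1 - z.2))
  fun_prop

lemma cmConv_comm (f g : ℝ × ℝ → ℝ≥0∞) : cmConv f g = cmConv g f := by
  ext p
  unfold cmConv
  rw [← lintegral_sub_left_eq_self _ p]
  simp [mul_comm]

lemma cmConv_one {f g : ℝ × ℝ → ℝ≥0∞} (hf : Measurable f) (hg : Measurable g) :
    ∫⁻ p, cmConv f g p = (∫⁻ p, f p) * ∫⁻ p, g p := by
  unfold cmConv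
  rw [lintegral_lintegral_swap (by fun_prop)]
  rw [← lintegral_mul_const _ hf]
  congr 1; ext q
  rw [lintegral_const_mul _ (by fun_prop), lintegral_sub_right_eq_self]

lemma cm_eLp_sq (f : ℝ × ℝ → ℝ≥0∞) : eLpNorm f 2 volume ^ 2 = ∫⁻ p, f p ^ 2 := by
  have := eLpNorm_nnreal_pow_eq_lintegral (f := f) (μ := volume) (p := 2) (by norm_num)
  simpa using this

lemma cmConv_two {f g : ℝ × ℝ → ℝ≥0∞} (hf : Measurable f) (hg : Measurable g) :
    eLpNorm (cmConv f g) 2 volume ≤ (∫⁻ p, f p) * eLpNorm g 2 volume := by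
  rw [← ENNReal.pow_le_pow_left_iff (n := 2) (by norm_num), mul_pow, cm_eLp_sq, cm_eLp_sq]
  calc ∫⁻ p, cmConv f g p ^ 2 ≤ ∫⁻ p, (∫⁻ q, f q) * cmConv f (fun q => g q ^ 2) p := by
        apply lintegral_mono; intro p
        exact cm_cs' _ hf (by fun_prop)
    _ = _ := by
      rw [lintegral_const_mul _ (cmConv_meas hf (by fun_prop)), cmConv_one hf (by fun_prop), sq, mul_assoc]

lemma cm_tonelli {A B C : ℝ × ℝ → ℝ≥0∞} (hA : Measurable A) (hB : Measurable B)
    (hC : Measurable C) (x t : ℝ) :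
    ∫⁻ w : ℝ × ℝ × ℝ × ℝ, A (w.1, w.2.2.1) * B (w.2.1, w.2.2.2) *
      C (x - w.1 - w.2.1, t - w.2.2.1 - w.2.2.2) = cmConv A (cmConv B C) (x, t) := by
  unfold cmConv
  have : ∀ q : ℝ × ℝ, A q * ∫⁻ r, B r * C ((x,t) - q - r) = ∫⁻ r, A q * (B r * C ((x,t)-q-r)) := by
    intro q; rw [lintegral_const_mul _ (by fun_prop)]
  simp only [this]
  rw [Measure.volume_eq_prod, lintegral_prod _ (by fun_prop), 
    Measure.volume_eq_prod ℝ ℝ, lintegral_prod _ (by 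
      apply Measurable.aemeasurable
      apply Measurable.lintegral_prod_right' (f := fun z : (ℝ×ℝ)×(ℝ×ℝ) => A z.1 * (B z.2 * C ((x,t) - z.1 - z.2)))
      fun_prop)]
  congr 1; ext a
  rw [Measure.volume_eq_prod ℝ (ℝ × ℝ), lintegral_prod _ (by fun_prop)]
  have h : ∀ c : ℝ, ∫⁻ r : ℝ × ℝ, A (a,c) * (B r * C ((x,t)-(a,c)-r)) ∂(volume.prod volume) = ∫⁻ b, ∫⁻ d, A (a,c) * (B (b,d) * C ((x,t)-(a,c)-(b,d))) := by
    intro c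
    rw [lintegral_prod _ (by fun_prop)]
  simp only [h]
  refine Eq.trans ?_ (lintegral_lintegral_swap ?_)
  · congr 1; ext b
    rw [Measure.volume_eq_prod ℝ ℝ, lintegral_prod _ (by fun_prop)]
    simp [mul_assoc]
  · apply Measurable.aemeasurable
    apply Measurable.lintegral_prod_right' (f := fun z : (ℝ×ℝ)×ℝ => A (a,z.1.2) * (B (z.1.1,z.2) * C ((x,t) - (a,z.1.2) - (z.1.1,z.2))))
    fun_prop

lemma cm_schwartz (u : SchwartzMap (ℝ × ℝ) ℂ) (uhat : ℝ × ℝ → ℂ)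
    (h : ∀ p : ℝ × ℝ,
        uhat p = ∫ q : ℝ × ℝ, Complex.exp (-Complex.I * (q.1 * p.1 + q.2 * p.2)) * u q) :
    ∃ v : SchwartzMap (ℝ × ℝ) ℂ, ∀ p, uhat p = v p := by
  let e := WithLp.prodContinuousLinearEquiv 2 ℝ ℝ ℝ
  let v1 : SchwartzMap (WithLp 2 (ℝ × ℝ)) ℂ := SchwartzMap.compCLMOfContinuousLinearEquiv ℂ e u
  let v2 : SchwartzMap (WithLp 2 (ℝ × ℝ)) ℂ := FourierTransform.fourier v1
  have hpi : (2 * Real.pi)⁻¹ ≠ 0 := by positivity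
  let s : (ℝ × ℝ) ≃L[ℝ] (ℝ × ℝ) := ContinuousLinearEquiv.smulLeft (Units.mk0 _ hpi)
  refine ⟨SchwartzMap.compCLMOfContinuousLinearEquiv ℂ (s.trans e.symm) v2, fun p => ?_⟩
  rw [h, SchwartzMap.compCLMOfContinuousLinearEquiv_apply, SchwartzMap.fourier_coe, Function.comp,
    Real.fourier_eq', 
    ← (WithLp.volume_preserving_toLp ℝ ℝ).integral_comp (MeasurableEquiv.toLp 2 (ℝ×ℝ)).measurableEmbedding]
  congr 1; ext q
  have h1 : v1 (WithLp.toLp 2 q) = u q := rfl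
  have h2 : inner ℝ (WithLp.toLp 2 q) ((s.trans e.symm) p) = (2*Real.pi)⁻¹ * (q.1*p.1+q.2*p.2) := by
    have : (s.trans e.symm) p = WithLp.toLp 2 ((2*Real.pi)⁻¹ • p) := rfl
    rw [this, WithLp.prod_inner_apply]
    simp
    ring
  rw [h1, h2, smul_eq_mul]
  congr 2
  have : (Real.pi : ℂ) ≠ 0 := by exact_mod_cast Real.pi_ne_zero
  push_cast
  field_simp

lemma cm_integrable (b : ℝ) (hb : 1/2 < b) (v : SchwartzMap (ℝ × ℝ) ℂ) :
    Integrable (fun p : ℝ × ℝ => (1 + |p.1|) ^ 4 * (1 + |p.2 - p.1 ^ 3|) ^ (2 * b) *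
            ‖v p‖ ^ 2) := by
  obtain ⟨k, hk⟩ := exists_nat_ge (2*b)
  have hd := SchwartzMap.one_add_le_sup_seminorm_apply (𝕜 := ℝ) (m := (4+3*k+3, 0)) le_rfl le_rfl v
  set D := 2 ^ ((4+3*k+3, 0) : ℕ × ℕ).1 * ((Finset.Iic ((4+3*k+3, 0) : ℕ × ℕ)).sup fun m => SchwartzMap.seminorm ℝ m.1 m.2) v
  simp only [norm_iteratedFDeriv_zero] at hd
  have hint : Integrable (fun p : ℝ × ℝ => D^2 * (1 + ‖p‖) ^ (-(3:ℝ))) :=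
    (integrable_one_add_norm (by simp; norm_num)).const_mul _
  refine hint.mono' ?_ ?_
  · apply Measurable.aestronglyMeasurable
    have := v.continuous.measurable
    fun_prop
  · refine Filter.Eventually.of_forall fun p => ?_
    have n1 : |p.1| ≤ ‖p‖ := norm_fst_le p
    have n2 : |p.2| ≤ ‖p‖ := norm_snd_le p
    have n0 := norm_nonneg p
    set r := ‖p‖
    have hp : 1 + |p.2 - p.1^3| ≤ (1+r)^3 := by
      have := abs_sub p.2 (p.1^3)
      rw [abs_pow] at this
      have h3 : |p.1|^3 ≤ r^3 := by gcongr
      nlinarith [sq_nonneg r]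
    have hw : (1 + |p.2 - p.1 ^ 3|) ^ (2 * b) ≤ (1+r)^(3*k) := by
      calc _ ≤ (1 + |p.2 - p.1 ^ 3|) ^ (k:ℝ) := 
            Real.rpow_le_rpow_of_exponent_le (by linarith [abs_nonneg (p.2 - p.1^3)]) hk
        _ = (1 + |p.2 - p.1 ^ 3|) ^ k := Real.rpow_natCast _ _
        _ ≤ ((1+r)^3)^k := by gcongr
        _ = _ := by rw [pow_mul]
    rw [Real.norm_of_nonneg (by positivity), Real.rpow_neg (by positivity), ← div_eq_mul_inv, le_div_iff₀ (by positivity),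
      show (3:ℝ) = ((3:ℕ):ℝ) by norm_num, Real.rpow_natCast]
    have hd' := hd p
    have : ((1+r)^(4+3*k+3) * ‖v p‖)^2 ≤ D^2 := by gcongr
    refine le_trans ?_ this
    calc _ ≤ (1+r)^4 * (1+r)^(3*k) * ‖v p‖^2 * (1+r)^3 := by gcongr
      _ = 1 * (1+r)^(4+3*k+3) * ‖v p‖^2 := by ring
      _ ≤ (1+r)^(4+3*k+3) * (1+r)^(4+3*k+3) * ‖v p‖^2 := by
        gcongr
        exact one_le_pow₀ (by linarith)
      _ = _ := by ring

lemma cm_K (b : ℝ) (hb : 1/2 < b) :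
    ∫⁻ p : ℝ × ℝ, ENNReal.ofReal ((1+|p.1|)⁻¹ * (1 + |p.2 - p.1 ^ 3|) ^ (-b)) ^ 2 < ∞ := by
  have e : ∀ x y : ℝ, ENNReal.ofReal ((1+|x|)⁻¹ * (1 + |y - x ^ 3|) ^ (-b)) ^ 2 =
      ENNReal.ofReal ((1+‖x‖)^(-(2:ℝ))) * ENNReal.ofReal ((1+‖y - x^3‖)^(-(2*b))) := by
    intro x y
    rw [← ENNReal.ofReal_pow (by positivity), ← ENNReal.ofReal_mul (by positivity), mul_pow, ← Real.rpow_mul_natCast (by positivity)]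
    rw [Real.rpow_neg (x := 1 + ‖x‖) (by positivity)]
    congr 2
    · norm_num
    · rw [Real.norm_eq_abs]; congr 1; push_cast; ring
  rw [Measure.volume_eq_prod, lintegral_prod _ (by fun_prop)]
  simp only [e]
  have : ∀ x : ℝ, ∫⁻ y : ℝ, ENNReal.ofReal ((1+‖x‖)^(-(2:ℝ))) * ENNReal.ofReal ((1+‖y - x^3‖)^(-(2*b)))
     = ENNReal.ofReal ((1+‖x‖)^(-(2:ℝ))) * ∫⁻ y : ℝ, ENNReal.ofReal ((1+‖y‖)^(-(2*b))) := by
    intro x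
    rw [lintegral_const_mul _ (by fun_prop), lintegral_sub_right_eq_self (fun y => ENNReal.ofReal ((1+‖y‖)^(-(2*b))))]
  simp only [this]
  rw [lintegral_mul_const _ (by fun_prop)]
  exact ENNReal.mul_lt_top (finite_integral_one_add_norm (by simp)) (finite_integral_one_add_norm (by simp; linarith))

lemma cm_L1 (b : ℝ) (hb : 1/2 < b) (v : SchwartzMap (ℝ × ℝ) ℂ) :
    ∫⁻ p : ℝ × ℝ, ENNReal.ofReal ((1+|p.1|) * ‖v p‖) ≤ ENNReal.ofReal
      (√(∫⁻ p : ℝ × ℝ, ENNReal.ofReal ((1+|p.1|)⁻¹ * (1 + |p.2 - p.1 ^ 3|) ^ (-b)) ^ 2).toReal *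
      √(∫ p : ℝ × ℝ, (1 + |p.1|) ^ 4 * (1 + |p.2 - p.1 ^ 3|) ^ (2 * b) * ‖v p‖ ^ 2)) := by
  have hm := v.continuous.measurable
  rw [← ENNReal.pow_le_pow_left_iff (n := 2) (by norm_num), ← ENNReal.ofReal_pow (by positivity),
    mul_pow, Real.sq_sqrt (by positivity), Real.sq_sqrt (integral_nonneg fun p => by positivity),
    ENNReal.ofReal_mul (by positivity), ENNReal.ofReal_toReal (cm_K b hb).ne,
    ofReal_integral_eq_lintegral_ofReal (cm_integrable b hb v)
      (Filter.Eventually.of_forall fun p => by positivity)]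
  have := cm_cs volume (f := fun p : ℝ × ℝ => ENNReal.ofReal ((1+|p.1|)⁻¹ * (1 + |p.2 - p.1 ^ 3|) ^ (-b)))
    (g := fun p : ℝ × ℝ => ENNReal.ofReal ((1+|p.1|)^2 * (1 + |p.2 - p.1 ^ 3|) ^ b * ‖v p‖))
    (by fun_prop) (by fun_prop)
  convert this using 2
  · congr 1; ext p
    rw [← ENNReal.ofReal_mul (by positivity), Real.rpow_neg (by positivity)]
    congr 1
    have : (1 + |p.2 - p.1 ^ 3|) ^ b ≠ 0 := by positivity
    field_simp
  · congr 1; ext p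
    rw [← ENNReal.ofReal_pow (by positivity), mul_pow, mul_pow, ← pow_mul, mul_comm 2 b,
      ← Real.rpow_mul_natCast (by positivity)]
    norm_num

lemma cm_L2 (b : ℝ) (hb : 1/2 < b) (v : SchwartzMap (ℝ × ℝ) ℂ) :
    eLpNorm (fun p : ℝ × ℝ => ENNReal.ofReal ((1+|p.1|)^2 * ‖v p‖)) 2 volume ≤ ENNReal.ofReal
      (√(∫ p : ℝ × ℝ, (1 + |p.1|) ^ 4 * (1 + |p.2 - p.1 ^ 3|) ^ (2 * b) * ‖v p‖ ^ 2)) := by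
  rw [← ENNReal.pow_le_pow_left_iff (n := 2) (by norm_num), ← ENNReal.ofReal_pow (by positivity),
    Real.sq_sqrt (integral_nonneg fun p => by positivity), cm_eLp_sq,
    ofReal_integral_eq_lintegral_ofReal (cm_integrable b hb v)
      (Filter.Eventually.of_forall fun p => by positivity)]
  apply lintegral_mono; intro p
  simp only
  rw [← ENNReal.ofReal_pow (by positivity)]
  apply ENNReal.ofReal_le_ofReal
  rw [mul_pow, ← pow_mul]
  gcongr
  apply le_mul_of_one_le_right (by positivity)
  exact Real.one_le_rpow (by linarith [abs_nonneg (p.2 - p.1^3)]) (by linarith)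

lemma cm_pt (σ x a b : ℝ) (hσ : 0 < σ) (z1 z2 z3 : ℂ) :
    ‖(x:ℂ)‖ₑ * ‖((1 - Real.cosh (σ * |x|) * (Real.cosh (σ * |a|))⁻¹ *
              (Real.cosh (σ * |b|))⁻¹ * (Real.cosh (σ * |x - a - b|))⁻¹ : ℝ) : ℂ) * z1 * z2 * z3‖ₑ
    ≤ ENNReal.ofReal (3 * σ^2) *
      (ENNReal.ofReal ((1+|a|)^2 * ‖z1‖) * ENNReal.ofReal ((1+|b|) * ‖z2‖) * ENNReal.ofReal ((1+|x-a-b|) * ‖z3‖)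
      + ENNReal.ofReal ((1+|a|) * ‖z1‖) * ENNReal.ofReal ((1+|b|)^2 * ‖z2‖) * ENNReal.ofReal ((1+|x-a-b|) * ‖z3‖)
      + ENNReal.ofReal ((1+|a|) * ‖z1‖) * ENNReal.ofReal ((1+|b|) * ‖z2‖) * ENNReal.ofReal ((1+|x-a-b|)^2 * ‖z3‖)) := by
  have h := cm_mult_bound σ x a b hσ
  simp only [← ofReal_norm, norm_mul, Complex.norm_real, Real.norm_eq_abs]
  set m := |1 - Real.cosh (σ * |x|) * (Real.cosh (σ * |a|))⁻¹ *
              (Real.cosh (σ * |b|))⁻¹ * (Real.cosh (σ * |x - a - b|))⁻¹|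
  repeat rw [← ENNReal.ofReal_mul (by positivity)]
  rw [← ENNReal.ofReal_add (by positivity) (by positivity), ← ENNReal.ofReal_add (by positivity) (by positivity),
    ← ENNReal.ofReal_mul (by positivity)]
  apply ENNReal.ofReal_le_ofReal
  have := mul_le_mul_of_nonneg_right h (by positivity : 0 ≤ ‖z1‖ * ‖z2‖ * ‖z3‖)
  calc _ = _ := by ring
    _ ≤ _ := this
    _ = _ := by ring


/-- Estimate (2.8) of Lemma 2.6 of the paper: `‖U F(U)‖_{L²_{x,t}} ≤ C σ² ‖U‖⁴_{X^{2,b}}`,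
stated on the Fourier side via the convolution `û ∗ G`, with `C` independent of `σ`. -/
theorem commutator_UL2_est (b : ℝ) (hb : 1 / 2 < b) :
    ∃ C > 0, ∀ σ : ℝ, 0 < σ → ∀ u : SchwartzMap (ℝ × ℝ) ℂ, ∀ uhat G : ℝ × ℝ → ℂ,
      (∀ p : ℝ × ℝ,
        uhat p = ∫ q : ℝ × ℝ, Complex.exp (-Complex.I * (q.1 * p.1 + q.2 * p.2)) * u q) →
      (∀ ξ τ : ℝ,
        G (ξ, τ) = (ξ : ℂ) * ∫ w : ℝ × ℝ × ℝ × ℝ,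
          (((1 - Real.cosh (σ * |ξ|) * (Real.cosh (σ * |w.1|))⁻¹ *
              (Real.cosh (σ * |w.2.1|))⁻¹ *
              (Real.cosh (σ * |ξ - w.1 - w.2.1|))⁻¹ : ℝ) : ℂ) *
            uhat (w.1, w.2.2.1) * uhat (w.2.1, w.2.2.2) *
            uhat (ξ - w.1 - w.2.1, τ - w.2.2.1 - w.2.2.2))) →
      eLpNorm (fun p : ℝ × ℝ =>
          ∫ q : ℝ × ℝ, uhat (p.1 - q.1, p.2 - q.2) * G q) 2 volume ≤
        ENNReal.ofReal (C * σ ^ 2 *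
          (∫ p : ℝ × ℝ, (1 + |p.1|) ^ 4 * (1 + |p.2 - p.1 ^ 3|) ^ (2 * b) *
            ‖uhat p‖ ^ 2) ^ 2) := by
  set K := √(∫⁻ p : ℝ × ℝ, ENNReal.ofReal ((1+|p.1|)⁻¹ * (1 + |p.2 - p.1 ^ 3|) ^ (-b)) ^ 2).toReal with hK
  refine ⟨9 * K^3 + 1, by positivity, ?_⟩
  intro σ hσ u uhat G hu hG
  obtain ⟨v, hv⟩ := cm_schwartz u uhat hu
  obtain rfl : uhat = v := funext hv
  have hm := v.continuous.measurable
  have hL1 := cm_L1 b hb v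
  have hL2 := cm_L2 b hb v
  rw [← hK] at hL1
  set N := ∫ p : ℝ × ℝ, (1 + |p.1|) ^ 4 * (1 + |p.2 - p.1 ^ 3|) ^ (2 * b) * ‖v p‖ ^ 2 with hN
  have hN0 : 0 ≤ N := integral_nonneg fun p => by positivity
  set H1 : ℝ × ℝ → ℝ≥0∞ := fun p => ENNReal.ofReal ((1+|p.1|) * ‖v p‖) with hH1
  set H2 : ℝ × ℝ → ℝ≥0∞ := fun p => ENNReal.ofReal ((1+|p.1|)^2 * ‖v p‖) with hH2
  have m1 : Measurable H1 := by fun_prop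
  have m2 : Measurable H2 := by fun_prop
  set T1 := cmConv H2 (cmConv H1 H1) with hT1
  set T2 := cmConv H1 (cmConv H2 H1) with hT2
  set T3 := cmConv H1 (cmConv H1 H2) with hT3
  have mT1 : Measurable T1 := cmConv_meas m2 (cmConv_meas m1 m1)
  have mT2 : Measurable T2 := cmConv_meas m1 (cmConv_meas m2 m1)
  have mT3 : Measurable T3 := cmConv_meas m1 (cmConv_meas m1 m2)
  set I := ∫⁻ p, H1 p with hI
  set E := eLpNorm H2 2 volume with hE
  have n3 : eLpNorm T3 2 volume ≤ I * (I * E) :=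
    (cmConv_two m1 (cmConv_meas m1 m2)).trans (by gcongr; exact cmConv_two m1 m2)
  have n2 : eLpNorm T2 2 volume ≤ I * (I * E) := by
    rw [hT2, cmConv_comm H2 H1]; exact n3
  have n1 : eLpNorm T1 2 volume ≤ I * (I * E) := by
    rw [hT1, cmConv_comm H2]
    refine (cmConv_two (cmConv_meas m1 m1) m2).trans ?_
    rw [cmConv_one m1 m1, mul_assoc]
  set T : ℝ × ℝ → ℝ≥0∞ := T1 + T2 + T3 with hT
  have mT : Measurable T := (mT1.add mT2).add mT3
  have nT : eLpNorm T 2 volume ≤ 3 * (I * (I * E)) := by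
    have e1 := eLpNorm_add_le (μ := volume) (p := 2) (mT1.add mT2).aestronglyMeasurable mT3.aestronglyMeasurable (by norm_num)
    have e2 := eLpNorm_add_le (μ := volume) (p := 2) mT1.aestronglyMeasurable mT2.aestronglyMeasurable (by norm_num)
    calc _ ≤ _ := e1
      _ ≤ (I * (I * E) + I * (I * E)) + I * (I * E) := by
        gcongr
        exact e2.trans (by gcongr)
      _ = _ := by ring
  have hGb : ∀ q : ℝ × ℝ, ‖G q‖ₑ ≤ ENNReal.ofReal (3 * σ^2) * T q := by
    rintro ⟨x, t⟩
    rw [hG, enorm_mul]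
    calc _ ≤ ‖(x:ℂ)‖ₑ * ∫⁻ w : ℝ × ℝ × ℝ × ℝ, _ := by
            gcongr; exact enorm_integral_le_lintegral_enorm _
      _ = _ := (lintegral_const_mul' _ _ (by simp)).symm
      _ ≤ _ := lintegral_mono fun w => cm_pt σ x w.1 w.2.1 hσ _ _ _
      _ = _ := lintegral_const_mul' _ _ ENNReal.ofReal_ne_top
      _ = _ := by
        congr 1
        rw [lintegral_add_left (by fun_prop), lintegral_add_left (by fun_prop)]
        simp only [hT, Pi.add_apply, hT1, hT2, hT3, ← cm_tonelli m2 m1 m1, ← cm_tonelli m1 m2 m1, ← cm_tonelli m1 m1 m2]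
        rfl
  have hpt : ∀ p : ℝ × ℝ, ‖∫ q : ℝ × ℝ, v (p.1 - q.1, p.2 - q.2) * G q‖ₑ ≤
      ‖cmConv H1 (fun q => ENNReal.ofReal (3 * σ^2) * T q) p‖ₑ := by
    intro p
    rw [cmConv_comm, enorm_eq_self]
    refine (enorm_integral_le_lintegral_enorm _).trans ?_
    refine lintegral_mono fun q => ?_
    simp only
    rw [enorm_mul, mul_comm]
    refine mul_le_mul' (hGb q) ?_
    rw [← ofReal_norm]
    apply ENNReal.ofReal_le_ofReal
    exact le_mul_of_one_le_left (norm_nonneg _) (by linarith [abs_nonneg (p-q).1])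
  have hcT : eLpNorm (fun q => ENNReal.ofReal (3 * σ^2) * T q) 2 volume = ENNReal.ofReal (3 * σ^2) * eLpNorm T 2 volume := by
    have hsq : eLpNorm (fun q => ENNReal.ofReal (3 * σ^2) * T q) 2 volume ^ 2 =
        (ENNReal.ofReal (3 * σ^2) * eLpNorm T 2 volume) ^ 2 := by
      simp only [mul_pow, cm_eLp_sq]
      rw [lintegral_const_mul _ (by fun_prop)]
    apply le_antisymm
    · rw [← ENNReal.pow_le_pow_left_iff (n := 2) (by norm_num), hsq]
    · rw [← ENNReal.pow_le_pow_left_iff (n := 2) (by norm_num), hsq]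
  calc _ ≤ _ := eLpNorm_mono_enorm hpt
    _ ≤ I * _ := cmConv_two m1 (by fun_prop)
    _ ≤ ENNReal.ofReal (K * √N) * (ENNReal.ofReal (3 * σ^2) * (ENNReal.ofReal 3 * (ENNReal.ofReal (K * √N) * (ENNReal.ofReal (K * √N) * ENNReal.ofReal (√N))))) := by
      rw [hcT]
      have : (3:ℝ≥0∞) = ENNReal.ofReal 3 := by simp
      rw [this] at nT
      gcongr
      refine nT.trans ?_
      gcongr
    _ = ENNReal.ofReal (9 * K^3 * σ^2 * N^2) := by
      repeat rw [← ENNReal.ofReal_mul (by positivity)]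
      congr 1
      have : √N ^ 4 = N^2 := by rw [show 4 = 2*2 by norm_num, pow_mul, Real.sq_sqrt hN0]
      rw [← this]; ring
    _ ≤ _ := by
      apply ENNReal.ofReal_le_ofReal
      gcongr
      linarith
end
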